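/- Let 𝓑 ⊆ ℕ be such that η* is a regular Toeplitz sequence. Then the ergodic measures are entropy-dense in P(X_η): for every μ ∈ P(X_η) there exist ergodic measures μ_n ∈ P^e(X_η) such that μ_n → μ in the weak-star topology and h(X_η,σ,μ_n) → h(X_η,σ,μ). -/

import Mathlib

/-!
For a profinite integer `g` let `η_g` and `η*_g` be the indicators of the `n` such that `g + n` is
divisible by no element of `𝓑`, respectively of `𝓑*`, so that `η*_g ≤ η_g`. The proof approximates
a given invariant measure `μ` by factors of an ergodic system whose points lie between `η*_g` and
`η_g`.

*Heredity.* For Haar almost every `g`, every sequence between `η*_g` and `η_g` lies in `X_η`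
(`ae_hereditary`). Almost surely each finite set of ones of `η_g` occurs in `η` with positive
density in every residue class of `g`. Within such a class a zero forced by `d`, where
`d 𝒜 ⊆ 𝓑` with `𝒜` infinite and pairwise coprime, is produced by `d a ∈ 𝓑` for some `a ∈ 𝒜` prime to
everything in sight, and independence modulo `a` keeps the density of the ones positive
(`kill_one`, `exists_pattern`). The density must satisfy the theorem of Davenport and Erdős, that
the density of multiples of `𝓑` is approximated by finite subsets of `𝓑`. An ultrafilter limit of
the normalised measures `∑ n ^ (-s)` as `s → 1⁺` does (`exists_dens`), because the normalised mass
of a set closed under divisors is monotone in `s` (`zm_mono`).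

*Approximation.* As `η*` is regular Toeplitz, its ones of bounded period form a periodic set `D`
which misses only a small proportion of `η*_g`; truncating `𝓑` gives a periodic set `V` containing
the `𝓑`-free numbers and only slightly larger than `η_g` (`exists_approx`). Let `L` be a common
period.

*The ergodic measures.* Every long word in the support of `μ` contains, after an offset less than
`L`, a block of length `M` which is in phase with `D` and `V`; this defines a law `Q` on blocks,
with nearly the word frequencies of `μ` and at least almost `M h(μ)` entropy (`exists_blockLaw`).
The product of the odometer on the profinite integers with the Bernoulli shift over `Q` is ergodic
(`Sm_ergodic`). Take blocks from the Bernoulli coordinate, concatenate them with phase given by the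
odometer coordinate `g`, then force zeros off `η_g` and ones on `η*_g`. The result lies in `X_η`
(`xx_mem`), and since the blocks are compatible with `D` and `V` the correction alters few
coordinates (`xx_ne_zz`). Hence its law is ergodic, has word frequencies close to those of `μ`, and
entropy at least `h(μ)` minus a small error (`exists_ergodic_approx`).

*Conclusion.* Word frequencies determine weak-star convergence, and entropy is an infimum of
continuous functions of word frequencies, hence upper semicontinuous; this gives the matching upper
bound for the limit of the entropies.
-/

open MeasureTheory Filter Topology
open scoped Classical

noncomputable section
namespace BFree


def cnt (A : Set ℤ) (L : ℕ) : ℝ := ∑ n ∈ Finset.Icc (1:ℤ) (L:ℤ), if n ∈ A then (1:ℝ) else 0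

def natDensity (A : Set ℤ) (d : ℝ) : Prop := Tendsto (fun L : ℕ => cnt A L / L) atTop (𝓝 d)

def upperDensity (A : Set ℤ) : ℝ := atTop.limsup fun L : ℕ => cnt A L / L

def lowerDensity (A : Set ℤ) : ℝ := atTop.liminf fun L : ℕ => cnt A L / L

def logDensity (A : Set ℤ) (d : ℝ) : Prop :=
  Tendsto (fun L : ℕ =>
      (∑ n ∈ Finset.Icc (1:ℤ) (L:ℤ), if n ∈ A then (n:ℝ)⁻¹ else 0) / Real.log L)
    atTop (𝓝 d)

def MB (B : Set ℕ) : Set ℤ := {n : ℤ | ∃ b ∈ B, (b:ℤ) ∣ n}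

def FB (B : Set ℕ) : Set ℤ := {n : ℤ | n ∉ MB B}

def eta (B : Set ℕ) : ℤ → Bool := fun n => if n ∈ FB B then true else false

def shift (x : ℤ → Bool) : ℤ → Bool := fun n => x (n + 1)

def shiftn (k : ℕ) (x : ℤ → Bool) : ℤ → Bool := fun n => x (n + (k:ℤ))

def orbitClosure (x : ℤ → Bool) : Set (ℤ → Bool) :=
  closure {y | ∃ m : ℤ, y = fun n => x (n + m)}

def Xeta (B : Set ℕ) : Set (ℤ → Bool) := orbitClosure (eta B)

def InvM (X : Set (ℤ → Bool)) : Set (Measure (ℤ → Bool)) :=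
  {μ | IsProbabilityMeasure μ ∧ μ.map shift = μ ∧ μ X = 1}

def primPart (S : Set ℕ) : Set ℕ := {b ∈ S | ∀ b' ∈ S, b' ∣ b → b' = b}

def Dset (B : Set ℕ) : Set ℕ :=
  {d | ∃ A : Set ℕ, A.Infinite ∧ (∀ a ∈ A, 0 < a) ∧ A.Pairwise Nat.Coprime ∧ ∀ a ∈ A, d * a ∈ B}

def Bstar (B : Set ℕ) : Set ℕ := primPart (B ∪ Dset B)

def etaStar (B : Set ℕ) : ℤ → Bool := eta (Bstar B)

def Behrend (A : Set ℕ) : Prop := (∀ a ∈ A, 0 < a) ∧ logDensity (MB A) 1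

def Cset (B : Set ℕ) : Set ℕ := {c | ∃ A : Set ℕ, Behrend A ∧ ∀ a ∈ A, c * a ∈ B}

def Bprime (B : Set ℕ) : Set ℕ := primPart (B ∪ Cset B)

def etaPrime (B : Set ℕ) : ℤ → Bool := eta (Bprime B)

def Taut (B : Set ℕ) : Prop :=
  ∀ b ∈ B, ∃ d1 d2 : ℝ, logDensity (MB (B \ {b})) d1 ∧ logDensity (MB B) d2 ∧ d1 < d2

def Per (x : ℤ → Bool) (s : ℕ) : Set ℤ := {i | ∀ k : ℤ, x (i + (s:ℤ) * k) = x i}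

def IsToeplitz (x : ℤ → Bool) : Prop := ∀ i : ℤ, ∃ s : ℕ, 0 < s ∧ i ∈ Per x s

def RegularToeplitz (x : ℤ → Bool) : Prop :=
  IsToeplitz x ∧ ∃ δ : ℕ → ℝ,
    (∀ r : ℕ, natDensity (⋃ s ∈ Finset.Icc 1 r, Per x s) (δ r)) ∧ Tendsto δ atTop (𝓝 1)

def QuasiGeneric (ℓ : ℕ → ℕ) (x : ℤ → Bool) (ν : Measure (ℤ → Bool)) : Prop :=
  ∀ f : C((ℤ → Bool), ℝ),
    Tendsto (fun i => (∑ n ∈ Finset.Icc 1 (ℓ i), f (shiftn n x)) / (ℓ i : ℝ)) atTop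
      (𝓝 (∫ y, f y ∂ν))

def RealizesLowerDensity (A : Set ℤ) (ℓ : ℕ → ℕ) : Prop :=
  Tendsto ℓ atTop atTop ∧ Tendsto (fun i => cnt A (ℓ i) / (ℓ i : ℝ)) atTop (𝓝 (lowerDensity A))

def IsMirsky (B : Set ℕ) (ν : Measure (ℤ → Bool)) : Prop :=
  IsProbabilityMeasure ν ∧ ∀ ℓ : ℕ → ℕ, RealizesLowerDensity (MB B) ℓ → QuasiGeneric ℓ (eta B) ν

def blocks (X : Set (ℤ → Bool)) (n : ℕ) : Set (Fin n → Bool) :=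
  {w | ∃ x ∈ X, ∃ m : ℤ, ∀ i : Fin n, x (m + (i:ℤ)) = w i}

def pCount (X : Set (ℤ → Bool)) (n : ℕ) : ℕ := (blocks X n).ncard

def topEnt (X : Set (ℤ → Bool)) : ℝ :=
  atTop.limsup fun n : ℕ => Real.logb 2 (pCount X n) / n

def cylinder {n : ℕ} (w : Fin n → Bool) : Set (ℤ → Bool) := {x | ∀ i : Fin n, x ((i:ℕ):ℤ) = w i}

def blockEntropy (μ : Measure (ℤ → Bool)) (n : ℕ) : ℝ :=
  -∑ w : Fin n → Bool, ((μ (cylinder w)).toReal * Real.logb 2 (μ (cylinder w)).toReal)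

def measEnt (μ : Measure (ℤ → Bool)) : ℝ := atTop.liminf fun n : ℕ => blockEntropy μ n / n

/-! ### Zeta measures on the integers -/

/-- A nonnegative `g` with `∑_{d ∣ n} g d = n ^ u` (Jordan's totient with a real exponent). -/
lemma exists_jordan (u : ℝ) (hu : 0 ≤ u) :
    ∃ g : ℕ → ℝ, (∀ d, 0 ≤ g d) ∧ ∀ n : ℕ, n ≠ 0 → ∑ d ∈ n.divisors, g d = (n : ℝ) ^ u := by
  let f : ArithmeticFunction ℝ := ⟨fun n => if n = 0 then 0 else (n : ℝ) ^ u, by simp⟩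
  have fapp : ∀ n : ℕ, n ≠ 0 → f n = (n : ℝ) ^ u := fun n hn => by
    change (if n = 0 then 0 else (n : ℝ) ^ u) = _
    simp [hn]
  have hf : f.IsMultiplicative := by
    refine ArithmeticFunction.IsMultiplicative.iff_ne_zero.2 ⟨by rw [fapp 1 one_ne_zero]; simp, ?_⟩
    intro m n hm hn _
    rw [fapp m hm, fapp n hn, fapp _ (mul_ne_zero hm hn), Nat.cast_mul,
      Real.mul_rpow (by positivity) (by positivity)]
  let g : ArithmeticFunction ℝ := f * (ArithmeticFunction.moebius : ArithmeticFunction ℝ)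
  have hg : g.IsMultiplicative := hf.mul ArithmeticFunction.isMultiplicative_moebius.intCast
  have hgf : g * (ArithmeticFunction.zeta : ArithmeticFunction ℝ) = f := by
    rw [mul_assoc, ArithmeticFunction.coe_moebius_mul_coe_zeta, mul_one]
  have hsum : ∀ n : ℕ, n ≠ 0 → ∑ d ∈ n.divisors, g d = (n : ℝ) ^ u := fun n hn => by
    rw [← ArithmeticFunction.coe_mul_zeta_apply, hgf, fapp n hn]
  refine ⟨g, fun d => ?_, hsum⟩
  rcases eq_or_ne d 0 with rfl | hd
  · simp
  rw [hg.multiplicative_factorization g hd]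
  refine Finset.prod_nonneg fun p hp => ?_
  have hpp : p.Prime := Nat.prime_of_mem_primeFactors (by simpa using hp)
  rcases h : d.factorization p with _ | k
  · simp [hg.1]
  · have h1 := hsum (p ^ (k + 1)) (pow_ne_zero _ hpp.ne_zero)
    have h2 := hsum (p ^ k) (pow_ne_zero _ hpp.ne_zero)
    rw [Nat.sum_divisors_prime_pow hpp] at h1 h2
    rw [Finset.sum_range_succ, h2] at h1
    have h3 : ((p ^ k : ℕ) : ℝ) ^ u ≤ ((p ^ (k + 1) : ℕ) : ℝ) ^ u := by
      apply Real.rpow_le_rpow (by positivity) _ hu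
      exact_mod_cast Nat.pow_le_pow_right hpp.pos (Nat.le_succ k)
    linarith

/-- The measure on `ℤ` with mass `n ^ (-s)` at each positive integer `n`. -/
def zm (s : ℝ) : Measure ℤ :=
  Measure.sum fun n : ℕ+ => ENNReal.ofReal ((n : ℝ) ^ (-s)) • Measure.dirac (n : ℤ)

lemma zm_apply (s : ℝ) (A : Set ℤ) :
    zm s A = ∑' n : ℕ+, ENNReal.ofReal ((n : ℝ) ^ (-s)) * A.indicator 1 (n : ℤ) := by
  rw [zm, Measure.sum_apply _ (MeasurableSet.of_discrete)]
  simp [Measure.dirac_apply' _ (MeasurableSet.of_discrete (s := A))]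

lemma zm_univ (s : ℝ) (hs : 1 < s) :
    zm s Set.univ = ENNReal.ofReal (∑' n : ℕ, 1 / (n : ℝ) ^ s) := by
  have hsum : Summable fun n : ℕ => 1 / (n : ℝ) ^ s := by
    simpa [one_div] using (Real.summable_nat_rpow_inv (p := s)).2 hs
  have h0 : (1 : ℝ) / ((0 : ℕ) : ℝ) ^ s = 0 := by
    rw [Nat.cast_zero, Real.zero_rpow (by linarith)]; simp
  rw [← tsum_zero_pnat_eq_tsum_nat hsum, h0, zero_add,
    ENNReal.ofReal_tsum_of_nonneg (fun n => by positivity)]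
  · rw [zm_apply]
    refine tsum_congr fun n => ?_
    simp [Real.rpow_neg]
  · exact hsum.comp_injective PNat.coe_injective

lemma zm_univ_pos (s : ℝ) (hs : 1 < s) : 0 < ∑' n : ℕ, 1 / (n : ℝ) ^ s := by
  have hsum : Summable fun n : ℕ => 1 / (n : ℝ) ^ s := by
    simpa [one_div] using (Real.summable_nat_rpow_inv (p := s)).2 hs
  exact hsum.tsum_pos (fun n => by positivity) 1 (by simp)

/-- Expanding `n ^ (-t) = n ^ (-s) * ∑_{d ∣ n} g d` and summing over multiples of `d` first. -/
lemma zm_expand (s t : ℝ) (g : ℕ → ℝ) (hg : ∀ d, 0 ≤ g d)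
    (hgs : ∀ n : ℕ, n ≠ 0 → ∑ d ∈ n.divisors, g d = (n : ℝ) ^ (s - t)) (A : Set ℤ) :
    zm t A = ∑' d : ℕ+, ENNReal.ofReal (g d * (d : ℝ) ^ (-s)) *
      zm s {m | (d : ℤ) * m ∈ A} := by
  let F : ℕ+ × ℕ+ → ENNReal := fun p =>
    ENNReal.ofReal (g p.1 * (p.1 : ℝ) ^ (-s)) * (ENNReal.ofReal ((p.2 : ℝ) ^ (-s)) *
      A.indicator 1 ((p.1 : ℤ) * (p.2 : ℤ)))
  have h1 : ∑' d : ℕ+, ENNReal.ofReal (g d * (d : ℝ) ^ (-s)) * zm s {m | (d : ℤ) * m ∈ A}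
      = ∑' p, F p := by
    rw [ENNReal.tsum_prod']
    refine tsum_congr fun d => ?_
    rw [zm_apply, ← ENNReal.tsum_mul_left]
    rfl
  rw [h1, ← sigmaAntidiagonalEquivProd.tsum_eq, ENNReal.tsum_sigma', zm_apply]
  refine tsum_congr fun n => ?_
  have h2 : ∀ x : Nat.divisorsAntidiagonal (n : ℕ),
      F (sigmaAntidiagonalEquivProd ⟨n, x⟩) =
        ENNReal.ofReal (g x.1.1) *
          (ENNReal.ofReal ((n : ℝ) ^ (-s)) * A.indicator 1 (n : ℤ)) := by
    rintro ⟨⟨a, b⟩, hx⟩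
    have hab := (Nat.mem_divisorsAntidiagonal.1 hx).1
    have e1 : ((n : ℕ+) : ℝ) = (a : ℝ) * b := by exact_mod_cast hab.symm
    have e2 : ((n : ℕ+) : ℤ) = (a : ℤ) * b := by exact_mod_cast hab.symm
    simp only [F, sigmaAntidiagonalEquivProd, Equiv.coe_fn_mk, divisorsAntidiagonalFactors,
      PNat.mk_coe]
    rw [ENNReal.ofReal_mul (hg _), e2, mul_assoc, ← mul_assoc (ENNReal.ofReal ((a : ℝ) ^ (-s))),
      ← ENNReal.ofReal_mul (by positivity), ← Real.mul_rpow (by positivity) (by positivity), e1]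
  rw [tsum_congr h2, Finset.tsum_subtype (Nat.divisorsAntidiagonal (n : ℕ))
    (fun x => ENNReal.ofReal (g x.1) *
      (ENNReal.ofReal ((n : ℝ) ^ (-s)) * A.indicator 1 (n : ℤ))), ← Finset.sum_mul,
    ← ENNReal.ofReal_sum_of_nonneg (fun i _ => hg _),
    Nat.sum_divisorsAntidiagonal (fun i _ => g i), hgs n n.ne_zero, ← mul_assoc,
    ← ENNReal.ofReal_mul (by positivity), ← Real.rpow_add (by exact_mod_cast n.pos)]
  congr 3
  ring

/-- For a set closed under taking (positive) divisors the normalised zeta masses increase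
with the exponent. -/
lemma zm_mono (s t : ℝ) (hts : t ≤ s) (A : Set ℤ)
    (hA : ∀ d m : ℕ+, (d : ℤ) * m ∈ A → (m : ℤ) ∈ A) :
    zm t A * zm s Set.univ ≤ zm s A * zm t Set.univ := by
  obtain ⟨g, hg, hgs⟩ := exists_jordan (s - t) (by linarith)
  rw [zm_expand s t g hg hgs A, zm_expand s t g hg hgs Set.univ]
  have : ∀ d : ℕ+, zm s {m | (d : ℤ) * m ∈ A} ≤ zm s A := by
    intro d
    rw [zm_apply, zm_apply]
    refine ENNReal.tsum_le_tsum fun m => ?_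
    refine mul_le_mul_right ?_ _
    by_cases h : (d : ℤ) * m ∈ A
    · simp [h, hA d m h]
    · simp [Set.indicator_apply, h]
  have hu : ∀ d : ℕ+, {m : ℤ | (d : ℤ) * m ∈ (Set.univ : Set ℤ)} = Set.univ := fun d => by
    ext; simp
  simp only [hu, ENNReal.tsum_mul_right]
  calc _ ≤ (∑' d : ℕ+, ENNReal.ofReal (g d * (d : ℝ) ^ (-s)) * zm s A) * zm s Set.univ := by
        exact mul_le_mul_left (ENNReal.tsum_le_tsum fun d => mul_le_mul_right (this d) _) _
    _ = _ := by rw [ENNReal.tsum_mul_right]; ring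

/-! ### A translation invariant density with the Davenport–Erdős property -/

/-- Normalised zeta mass of `A`. -/
def pz (s : ℝ) (A : Set ℤ) : ℝ := (zm s A).toReal / (zm s Set.univ).toReal

lemma zm_finite (s : ℝ) (hs : 1 < s) : IsFiniteMeasure (zm s) :=
  ⟨by rw [zm_univ s hs]; exact ENNReal.ofReal_lt_top⟩

lemma zm_univ_toReal (s : ℝ) (hs : 1 < s) :
    (zm s Set.univ).toReal = ∑' n : ℕ, 1 / (n : ℝ) ^ s := by
  rw [zm_univ s hs, ENNReal.toReal_ofReal (zm_univ_pos s hs).le]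

lemma pz_mono (s t : ℝ) (ht : 1 < t) (hts : t ≤ s) (A : Set ℤ)
    (hA : ∀ d m : ℕ+, (d : ℤ) * m ∈ A → (m : ℤ) ∈ A) : pz t A ≤ pz s A := by
  have hs := ht.trans_le hts
  have := zm_finite s hs
  have := zm_finite t ht
  have h := zm_mono s t hts A hA
  have h1 := ENNReal.toReal_mono (by finiteness) h
  rw [ENNReal.toReal_mul, ENNReal.toReal_mul] at h1
  rw [pz, pz, div_le_div_iff₀]
  · linarith
  · rw [zm_univ_toReal t ht]; exact zm_univ_pos t ht
  · rw [zm_univ_toReal s hs]; exact zm_univ_pos s hs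

lemma pz_add (s : ℝ) (hs : 1 < s) (A C : Set ℤ) (h : Disjoint A C) :
    pz s (A ∪ C) = pz s A + pz s C := by
  have := zm_finite s hs
  rw [pz, pz, pz, measure_union h MeasurableSet.of_discrete,
    ENNReal.toReal_add (by finiteness) (by finiteness), add_div]

lemma pz_univ (s : ℝ) (hs : 1 < s) : pz s Set.univ = 1 := by
  rw [pz, div_self]
  rw [zm_univ_toReal s hs]; exact (zm_univ_pos s hs).ne'

lemma pz_nonneg (s : ℝ) (A : Set ℤ) : 0 ≤ pz s A := by unfold pz; positivity

lemma pz_le_one (s : ℝ) (hs : 1 < s) (A : Set ℤ) : pz s A ≤ 1 := by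
  rw [← pz_univ s hs, ← Set.union_compl_self A, pz_add s hs _ _ disjoint_compl_right]
  linarith [pz_nonneg s Aᶜ]

lemma pz_shift (s : ℝ) (hs : 1 < s) (A : Set ℤ) :
    pz s A ≤ pz s ((· + 1) ⁻¹' A) + 1 / ∑' n : ℕ, 1 / (n : ℝ) ^ s := by
  have := zm_finite s hs
  have key : zm s A ≤ zm s ((· + 1) ⁻¹' A) + 1 := by
    have e : zm s A = ∑' n : ℕ, ENNReal.ofReal (((n + 1 : ℕ) : ℝ) ^ (-s)) *
        A.indicator 1 ((n + 1 : ℕ) : ℤ) := by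
      rw [zm_apply]
      exact tsum_pnat_eq_tsum_succ (f := fun n : ℕ => ENNReal.ofReal ((n : ℝ) ^ (-s)) *
        A.indicator 1 (n : ℤ))
    have e' : zm s ((· + 1) ⁻¹' A) = ∑' n : ℕ, ENNReal.ofReal (((n + 1 : ℕ) : ℝ) ^ (-s)) *
        A.indicator 1 ((n + 1 + 1 : ℕ) : ℤ) := by
      rw [zm_apply]
      exact tsum_pnat_eq_tsum_succ (f := fun n : ℕ => ENNReal.ofReal ((n : ℝ) ^ (-s)) *
        A.indicator 1 ((n + 1 : ℕ) : ℤ))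
    rw [e, e', tsum_eq_zero_add' ENNReal.summable, add_comm]
    refine add_le_add (ENNReal.tsum_le_tsum fun n => mul_le_mul_left ?_ _) ?_
    · refine ENNReal.ofReal_le_ofReal ?_
      exact Real.rpow_le_rpow_of_nonpos (by positivity) (by push_cast; linarith) (by linarith)
    · simp only [zero_add, Nat.cast_one, Real.one_rpow, ENNReal.ofReal_one, one_mul]
      refine (Set.indicator_le_self' (fun _ _ => zero_le) _).trans (by simp)
  have h1 := ENNReal.toReal_mono (by finiteness) key
  rw [ENNReal.toReal_add (by finiteness) (by finiteness), ENNReal.toReal_one] at h1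
  rw [pz, pz, zm_univ_toReal s hs, ← add_div]
  have := zm_univ_pos s hs
  gcongr

/-- The zeta function has a pole at `1`; this makes the limit density translation invariant. -/
lemma tendsto_inv_zeta :
    Tendsto (fun s : ℝ => 1 / ∑' n : ℕ, 1 / (n : ℝ) ^ s) (𝓝[>] 1) (𝓝 0) := by
  have h1 : Tendsto (fun s : ℝ => s - 1) (𝓝[>] 1) (𝓝 0) := by
    have : Tendsto (fun s : ℝ => s - 1) (𝓝 1) (𝓝 (1 - 1)) := tendsto_id.sub_const 1
    rw [sub_self] at this
    exact this.mono_left nhdsWithin_le_nhds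
  have h2 := h1.div tendsto_sub_mul_tsum_nat_rpow one_ne_zero
  rw [zero_div] at h2
  refine h2.congr' ?_
  filter_upwards [self_mem_nhdsWithin] with s hs
  have h3 : s - 1 ≠ 0 := by
    have : (1 : ℝ) < s := hs
    linarith
  simp only [Pi.div_apply]
  rw [div_mul_eq_div_div, div_self h3]

/-- Finitely additive translation invariant densities on `ℤ` which satisfy the conclusion
of the Davenport–Erdős theorem. -/
structure IsDens (δ : Set ℤ → ℝ) : Prop where
  nonneg : ∀ A, 0 ≤ δ A
  univ : δ Set.univ = 1
  add : ∀ A C, Disjoint A C → δ (A ∪ C) = δ A + δ C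
  shift : ∀ A, δ ((· + 1) ⁻¹' A) = δ A
  de : ∀ B : Set ℕ, ∀ ε > 0, ∃ K : ℕ, δ (MB B) ≤ δ (MB {b ∈ B | b ≤ K}) + ε

/-- The limit of the zeta densities along an ultrafilter `s → 1⁺`. -/
lemma exists_dens : ∃ δ : Set ℤ → ℝ, IsDens δ := by
  let U : Ultrafilter ℝ := Ultrafilter.of (𝓝[>] 1)
  have hU : (U : Filter ℝ) ≤ 𝓝[>] 1 := Ultrafilter.of_le _
  have hlim : ∀ A : Set ℤ, ∃ a : ℝ, 0 ≤ a ∧ Tendsto (fun s => pz s A) U (𝓝 a) := by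
    intro A
    obtain ⟨a, ha, h⟩ := (isCompact_Icc (a := (0 : ℝ)) (b := 1)).ultrafilter_le_nhds
      (U.map fun s => pz s A) (by
        rw [le_principal_iff]
        have : ∀ᶠ s in (𝓝[>] (1 : ℝ)), pz s A ∈ Set.Icc (0 : ℝ) 1 := by
          filter_upwards [self_mem_nhdsWithin] with s hs
          exact ⟨pz_nonneg s A, pz_le_one s hs A⟩
        exact hU this)
    exact ⟨a, ha.1, h⟩
  choose δ hδ0 hδ using hlim
  have hgt : ∀ᶠ s in (U : Filter ℝ), 1 < s := hU self_mem_nhdsWithin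
  have hadd : ∀ A C, Disjoint A C → δ (A ∪ C) = δ A + δ C := by
    intro A C h
    refine tendsto_nhds_unique (hδ (A ∪ C)) (((hδ A).add (hδ C)).congr' ?_)
    filter_upwards [hgt] with s hs
    exact (pz_add s hs A C h).symm
  have huniv : δ Set.univ = 1 := by
    refine tendsto_nhds_unique (hδ Set.univ) (tendsto_const_nhds.congr' ?_)
    filter_upwards [hgt] with s hs
    exact (pz_univ s hs).symm
  have hcompl : ∀ A, δ Aᶜ = 1 - δ A := fun A => by
    have := hadd A Aᶜ disjoint_compl_right
    rw [Set.union_compl_self, huniv] at this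
    linarith
  have hsh : ∀ A, δ A ≤ δ ((· + 1) ⁻¹' A) := by
    intro A
    have h := (hδ ((· + 1) ⁻¹' A)).add (tendsto_inv_zeta.mono_left hU)
    rw [add_zero] at h
    refine le_of_tendsto_of_tendsto (hδ A) h ?_
    filter_upwards [hgt] with s hs
    exact pz_shift s hs A
  have hdec : ∀ A : Set ℤ, (∀ d m : ℕ+, (d : ℤ) * m ∈ A → (m : ℤ) ∈ A) →
      ∀ s, 1 < s → δ A ≤ pz s A := by
    intro A hA s hs
    refine le_of_tendsto (hδ A) ?_
    have : ∀ᶠ t in (𝓝[>] (1 : ℝ)), t ∈ Set.Ioo 1 s := Ioo_mem_nhdsGT hs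
    filter_upwards [hU this] with t ht
    exact pz_mono s t ht.1 ht.2.le A hA
  refine ⟨δ, hδ0, huniv, hadd, fun A => le_antisymm ?_ (hsh A), ?_⟩
  · have := hsh Aᶜ
    rw [Set.preimage_compl, hcompl, hcompl] at this
    linarith
  · intro B ε hε
    have hs : ∀ᶠ s in (U : Filter ℝ), δ (MB B) - ε / 2 < pz s (MB B) :=
      (hδ (MB B)).eventually (lt_mem_nhds (by linarith))
    obtain ⟨s, hs1, hs2⟩ := (hgt.and hs).exists
    have := zm_finite s hs1
    have hun : MB B = ⋃ K : ℕ, MB {b ∈ B | b ≤ K} := by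
      ext n
      simp only [MB, Set.mem_ofPred_eq, Set.mem_iUnion]
      constructor
      · rintro ⟨b, hb, h⟩; exact ⟨b, b, ⟨hb, le_rfl⟩, h⟩
      · rintro ⟨K, b, hb, h⟩; exact ⟨b, hb.1, h⟩
    have hmono : Monotone fun K : ℕ => MB {b ∈ B | b ≤ K} := by
      rintro K K' h n ⟨b, hb, hn⟩
      exact ⟨b, ⟨hb.1, hb.2.trans h⟩, hn⟩
    have ht := tendsto_measure_iUnion_atTop (μ := zm s) hmono
    rw [← hun] at ht
    have ht' : Tendsto (fun K : ℕ => pz s (MB {b ∈ B | b ≤ K})) atTop (𝓝 (pz s (MB B))) :=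
      ((ENNReal.tendsto_toReal (by finiteness)).comp ht).div_const _
    obtain ⟨K, hK⟩ := (ht'.eventually (lt_mem_nhds (show pz s (MB B) - ε / 2 < _ by
      linarith))).exists
    refine ⟨K, ?_⟩
    have h1 := hdec (MB {b ∈ B | b ≤ K})ᶜ (by
      intro d m h ⟨b, hb, hm⟩
      exact h ⟨b, hb, hm.mul_left _⟩) s hs1
    have h2 := pz_add s hs1 (MB {b ∈ B | b ≤ K}) _ disjoint_compl_right
    rw [Set.union_compl_self, pz_univ s hs1] at h2
    rw [hcompl] at h1
    linarith

/-! ### Heredity of patterns -/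

lemma dvd_of_dvd_of_eq {a x y : ℤ} (h : a ∣ x) (e : x = y) : a ∣ y := e ▸ h

namespace IsDens
variable {δ : Set ℤ → ℝ} (hδ : IsDens δ)
include hδ

lemma mono {A C : Set ℤ} (h : A ⊆ C) : δ A ≤ δ C := by
  have := hδ.add A (C \ A) Set.disjoint_sdiff_right
  rw [Set.union_sdiff_cancel h] at this
  linarith [hδ.nonneg (C \ A)]

lemma empty : δ ∅ = 0 := by
  have := hδ.add ∅ ∅ (by simp)
  simp at this
  linarith

lemma sdiff {A C : Set ℤ} (h : A ⊆ C) : δ (C \ A) = δ C - δ A := by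
  have := hδ.add A (C \ A) Set.disjoint_sdiff_right
  rw [Set.union_sdiff_cancel h] at this
  linarith

lemma union_le (A C : Set ℤ) : δ (A ∪ C) ≤ δ A + δ C := by
  have := hδ.add A (C \ A) Set.disjoint_sdiff_right
  rw [Set.union_sdiff_self] at this
  linarith [hδ.mono (Set.sdiff_subset : C \ A ⊆ C)]

lemma biUnion_le {ι : Type*} (s : Finset ι) (A : ι → Set ℤ) :
    δ (⋃ i ∈ s, A i) ≤ ∑ i ∈ s, δ (A i) := by
  induction s using Finset.induction_on with
  | empty => simp [hδ.empty]
  | insert i s hi ih =>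
    rw [Finset.set_biUnion_insert, Finset.sum_insert hi]
    exact (hδ.union_le _ _).trans (by linarith)

lemma shift_nat (A : Set ℤ) (k : ℕ) : δ ((· + (k : ℤ)) ⁻¹' A) = δ A := by
  induction k with
  | zero => simp
  | succ k ih =>
    rw [← ih, ← hδ.shift ((· + (k : ℤ)) ⁻¹' A)]
    congr 1
    ext m
    simp only [Set.mem_preimage, Nat.cast_succ]
    rw [add_assoc, add_comm (1 : ℤ)]

lemma shift_int (A : Set ℤ) (k : ℤ) : δ ((· + k) ⁻¹' A) = δ A := by
  obtain ⟨n, rfl | rfl⟩ := k.eq_nat_or_neg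
  · exact hδ.shift_nat A n
  · rw [← hδ.shift_nat ((· + (-(n : ℤ))) ⁻¹' A) n]
    congr 1
    ext m
    simp

lemma sum_fiber {ι : Type*} (f : ℤ → ι) (A : Set ℤ) (s : Finset ι) :
    δ (A ∩ f ⁻¹' s) = ∑ i ∈ s, δ (A ∩ f ⁻¹' {i}) := by
  induction s using Finset.induction_on with
  | empty => simp [hδ.empty]
  | insert i s hi ih =>
    rw [Finset.sum_insert hi, ← ih, Finset.coe_insert, Set.insert_eq, Set.preimage_union,
      Set.inter_union_distrib_left, hδ.add]
    rw [Set.disjoint_left]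
    rintro m ⟨_, h1⟩ ⟨_, h2⟩
    simp only [Set.mem_preimage, Set.mem_singleton_iff, Finset.mem_coe] at h1 h2
    exact hi (h1 ▸ h2)

/-- A set with a period prime to `a` is independent of the residue classes modulo `a`. -/
lemma indep (A : Set ℤ) (q a : ℕ) (ha : 0 < a) (hq : Nat.Coprime q a)
    (hA : ∀ m, m + (q : ℤ) ∈ A ↔ m ∈ A) (t : ZMod a) :
    δ (A ∩ (fun m : ℤ => (m : ZMod a)) ⁻¹' {t}) = δ A / a := by
  have : NeZero a := ⟨ha.ne'⟩
  let f : ℤ → ZMod a := fun m => (m : ZMod a)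
  have h1 : ∀ t : ZMod a, δ (A ∩ f ⁻¹' {t + q}) = δ (A ∩ f ⁻¹' {t}) := by
    intro t
    rw [← hδ.shift_int (A ∩ f ⁻¹' {t + q}) q]
    congr 1
    ext m
    simp [f, hA]
  have h2 : ∀ (k : ℕ) (t : ZMod a), δ (A ∩ f ⁻¹' {t + k * q}) = δ (A ∩ f ⁻¹' {t}) := by
    intro k
    induction k with
    | zero => simp
    | succ k ih =>
      intro t
      rw [← ih t, ← h1 (t + k * q)]
      congr 4
      push_cast; ring
  have h3 : ∀ t' : ZMod a, δ (A ∩ f ⁻¹' {t'}) = δ (A ∩ f ⁻¹' {t}) := by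
    intro t'
    obtain ⟨u, hu⟩ : ∃ u : (ZMod a)ˣ, (u : ZMod a) = q :=
      ⟨ZMod.unitOfCoprime q hq, ZMod.coe_unitOfCoprime q hq⟩
    have := h2 (((t' - t) * (u⁻¹ : (ZMod a)ˣ) : ZMod a).val) t
    rwa [ZMod.natCast_val, ZMod.cast_id, ← hu, mul_assoc, Units.inv_mul, mul_one,
      add_sub_cancel] at this
  have h4 := hδ.sum_fiber f A Finset.univ
  rw [Finset.sum_congr rfl (fun t' _ => h3 t')] at h4
  simp only [Finset.coe_univ, Set.preimage_univ, Set.inter_univ, Finset.sum_const,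
    Finset.card_univ, ZMod.card, nsmul_eq_mul] at h4
  have : (a : ℝ) ≠ 0 := by exact_mod_cast ha.ne'
  field_simp
  linarith

/-- Unions of residue classes modulo `L` have the expected density. -/
lemma zmod (L : ℕ) (hL : 0 < L) (S : Finset (ZMod L)) :
    δ ((fun m : ℤ => (m : ZMod L)) ⁻¹' S) = S.card / L := by
  have h := hδ.sum_fiber (fun m : ℤ => (m : ZMod L)) Set.univ S
  rw [Set.univ_inter] at h
  rw [h, Finset.sum_congr rfl (fun t _ => hδ.indep Set.univ 1 L hL (by simp) (by simp) t), hδ.univ]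
  simp [div_eq_mul_inv]

end IsDens

/-- Integers `m` such that `m + n` is `B`-free for all `n ∈ O`. -/
def freeAt (B : Set ℕ) (O : Finset ℤ) : Set ℤ := {m | ∀ n ∈ O, m + n ∉ MB B}

/-- The elements of `B` up to `K`. -/
def cut (B : Set ℕ) (K : ℕ) : Set ℕ := {b ∈ B | b ≤ K}

lemma cut_subset (B : Set ℕ) (K : ℕ) : cut B K ⊆ B := fun _ h => h.1

lemma cut_finite (B : Set ℕ) (K : ℕ) : (cut B K).Finite :=
  (Set.finite_Iic K).subset fun _ h => h.2

lemma MB_mono {B C : Set ℕ} (h : B ⊆ C) : MB B ⊆ MB C := fun _ ⟨b, hb, hn⟩ => ⟨b, h hb, hn⟩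

lemma freeAt_anti {B C : Set ℕ} (h : B ⊆ C) (O : Finset ℤ) : freeAt C O ⊆ freeAt B O :=
  fun _ hm n hn hmem => hm n hn (MB_mono h hmem)

/-- Davenport–Erdős for patterns: truncating `B` changes the density of `freeAt B O` by little. -/
lemma freeAt_approx {δ : Set ℤ → ℝ} (hδ : IsDens δ) (B : Set ℕ) (O : Finset ℤ) (ε : ℝ)
    (hε : 0 < ε) : ∃ K, δ (freeAt (cut B K) O \ freeAt B O) ≤ ε := by
  obtain ⟨K, hK⟩ := hδ.de B (ε / (O.card + 1)) (by positivity)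
  refine ⟨K, ?_⟩
  have hsub : freeAt (cut B K) O \ freeAt B O ⊆
      ⋃ n ∈ O, (· + n) ⁻¹' (MB B \ MB (cut B K)) := by
    rintro m ⟨h1, h2⟩
    simp only [freeAt, Set.mem_ofPred_eq, not_forall, not_not] at h2
    obtain ⟨n, hn, h⟩ := h2
    simp only [Set.mem_iUnion]
    exact ⟨n, hn, h, h1 n hn⟩
  refine (hδ.mono hsub).trans ((hδ.biUnion_le _ _).trans ?_)
  have : ∀ n ∈ O, δ ((· + n) ⁻¹' (MB B \ MB (cut B K))) ≤ ε / (O.card + 1) := by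
    intro n _
    rw [hδ.shift_int, hδ.sdiff (MB_mono (cut_subset B K))]
    change δ (MB B) ≤ δ (MB (cut B K)) + _ at hK
    linarith
  refine (Finset.sum_le_sum this).trans ?_
  rw [Finset.sum_const, nsmul_eq_mul, mul_div_assoc', div_le_iff₀ (by positivity)]
  nlinarith

lemma MB_add_mul {B : Set ℕ} {q : ℤ} (hq : ∀ b ∈ B, (b : ℤ) ∣ q) (m : ℤ) :
    m + q ∈ MB B ↔ m ∈ MB B := by
  constructor
  · rintro ⟨b, hb, h⟩; exact ⟨b, hb, (dvd_add_left (hq b hb)).1 h⟩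
  · rintro ⟨b, hb, h⟩; exact ⟨b, hb, (dvd_add_left (hq b hb)).2 h⟩

/-- Conditioning on a residue class modulo `a`, with `a` prime to `L`, keeps the density of a
class modulo `L` free of the elements of `B` prime to `a`, up to the factor `1 / a`. -/
lemma indep_freeAt {δ : Set ℤ → ℝ} (hδ : IsDens δ) (B : Set ℕ) (O : Finset ℤ)
    (L a : ℕ) (ha : 0 < a) (hLa : Nat.Coprime L a) (hcop : ∀ b ∈ B, Nat.Coprime b a)
    (r : ℤ) (t : ZMod a) :
    δ ({m | (L : ℤ) ∣ m - r} ∩ freeAt B O) / a ≤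
      δ ({m | (L : ℤ) ∣ m - r} ∩ freeAt B O ∩ (fun m : ℤ => (m : ZMod a)) ⁻¹' {t}) := by
  refine le_of_forall_pos_le_add fun ε hε => ?_
  obtain ⟨K, hK⟩ := freeAt_approx hδ B O ε hε
  set R : Set ℤ := {m | (L : ℤ) ∣ m - r}
  set T : Set ℤ := (fun m : ℤ => (m : ZMod a)) ⁻¹' {t}
  let q : ℕ := L * ∏ b ∈ (cut_finite B K).toFinset, b
  have hq : Nat.Coprime q a := by
    refine Nat.Coprime.mul_left hLa (Nat.Coprime.prod_left fun b hb => ?_)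
    exact hcop b (cut_subset B K ((cut_finite B K).mem_toFinset.1 hb))
  have hbq : ∀ b ∈ cut B K, (b : ℤ) ∣ (q : ℤ) := by
    intro b hb
    refine Int.natCast_dvd_natCast.2 (Dvd.dvd.mul_left ?_ _)
    exact Finset.dvd_prod_of_mem (fun b => b) ((cut_finite B K).mem_toFinset.2 hb)
  have hper : ∀ m, m + (q : ℤ) ∈ R ∩ freeAt (cut B K) O ↔ m ∈ R ∩ freeAt (cut B K) O := by
    intro m
    refine and_congr ?_ ?_
    · change (L : ℤ) ∣ m + q - r ↔ (L : ℤ) ∣ m - r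
      rw [add_sub_right_comm]
      exact dvd_add_left (by simp [q])
    · refine forall₂_congr fun n _ => not_congr ?_
      rw [add_right_comm]
      exact MB_add_mul hbq _
  have h1 := hδ.indep _ q a ha hq hper t
  have h2 : δ (R ∩ freeAt B O) ≤ δ (R ∩ freeAt (cut B K) O) :=
    hδ.mono (Set.inter_subset_inter_right _ (freeAt_anti (cut_subset B K) O))
  have h3 : δ (R ∩ freeAt (cut B K) O ∩ T) ≤
      δ (R ∩ freeAt B O ∩ T) + δ (freeAt (cut B K) O \ freeAt B O) := by
    refine (hδ.mono ?_).trans (hδ.union_le _ _)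
    rintro m ⟨⟨h1, h2⟩, h3⟩
    by_cases h : m ∈ freeAt B O
    · exact Or.inl ⟨⟨h1, h⟩, h3⟩
    · exact Or.inr ⟨h2, h⟩
  have h4 : δ (R ∩ freeAt B O) / a ≤ δ (R ∩ freeAt (cut B K) O) / a := by gcongr
  linarith

/-- Each prime factor of `Q` divides at most one element of a pairwise coprime set. -/
lemma exists_coprime_mem (A : Set ℕ) (hinf : A.Infinite) (hcop : A.Pairwise Nat.Coprime)
    (Q : ℕ) (hQ : Q ≠ 0) : ∃ a ∈ A, Nat.Coprime a Q := by
  by_contra! h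
  have hp : ∀ a ∈ A, (Nat.gcd a Q).minFac.Prime := fun a ha => Nat.minFac_prime (h a ha)
  have hmaps : Set.MapsTo (fun a => (Nat.gcd a Q).minFac) A (Q.divisors : Set ℕ) := by
    intro a ha
    simp only [Finset.mem_coe, Nat.mem_divisors]
    exact ⟨(Nat.minFac_dvd _).trans (Nat.gcd_dvd_right _ _), hQ⟩
  have hinj : Set.InjOn (fun a => (Nat.gcd a Q).minFac) A := by
    intro a ha a' ha' heq
    by_contra hne
    have h1 : (Nat.gcd a Q).minFac ∣ a := (Nat.minFac_dvd _).trans (Nat.gcd_dvd_left _ _)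
    have h2 : (Nat.gcd a Q).minFac ∣ a' := by
      have : (Nat.gcd a Q).minFac = (Nat.gcd a' Q).minFac := heq
      rw [this]
      exact (Nat.minFac_dvd _).trans (Nat.gcd_dvd_left _ _)
    exact Nat.not_coprime_of_dvd_of_dvd (hp a ha).one_lt h1 h2 (hcop ha ha' hne)
  exact hinf (Set.Finite.of_injOn hmaps hinj (Finset.finite_toSet _))

lemma Dset_pos {B : Set ℕ} (hB : 0 ∉ B) {d : ℕ} (hd : d ∈ B ∪ Dset B) : 0 < d := by
  rcases hd with hd | ⟨A, hinf, _, _, h⟩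
  · exact Nat.pos_of_ne_zero fun h => hB (h ▸ hd)
  · obtain ⟨a, ha⟩ := hinf.nonempty
    refine Nat.pos_of_ne_zero fun h0 => hB ?_
    have := h a ha
    rwa [h0, zero_mul] at this

/-- A single zero forced by `d ∈ Dset B` can be realised by an element of `B`. -/
lemma kill_one {δ : Set ℤ → ℝ} (hδ : IsDens δ) (B : Set ℕ) (O : Finset ℤ)
    (L : ℕ) (hL : 0 < L) (r : ℤ) (hpos : 0 < δ ({m | (L : ℤ) ∣ m - r} ∩ freeAt B O))
    (n : ℤ) (hn : n ∉ O) (d : ℕ) (hd : d ∈ B ∪ Dset B) (hdL : d ∣ L) (hdr : (d : ℤ) ∣ r + n) :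
    ∃ (L' : ℕ) (r' : ℤ), 0 < L' ∧ L ∣ L' ∧ (L : ℤ) ∣ r' - r ∧
      0 < δ ({m | (L' : ℤ) ∣ m - r'} ∩ freeAt B O) ∧
      ∃ b ∈ B, b ∣ L' ∧ (b : ℤ) ∣ r' + n := by
  rcases hd with hd | ⟨A, hinf, hApos, hcop, hAB⟩
  · exact ⟨L, r, hL, dvd_rfl, by simp, hpos, d, hd, hdL, hdr⟩
  -- `a` prime to `L` allows the Chinese remainder theorem; `a` prime to the differences `n' - n`
  -- ensures that imposing `a ∣ m + n` creates no zero in `O` through elements of `B` not prime to `a`.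
  let Q : ℕ := L * ∏ n' ∈ O, (n' - n).natAbs
  have hQ : Q ≠ 0 := by
    refine mul_ne_zero hL.ne' (Finset.prod_ne_zero_iff.2 fun n' hn' => ?_)
    rw [Int.natAbs_ne_zero, sub_ne_zero]
    exact fun h => hn (h ▸ hn')
  obtain ⟨a, haA, haQ⟩ := exists_coprime_mem A hinf hcop Q hQ
  have ha : 0 < a := hApos a haA
  have haL : Nat.Coprime a L := Nat.Coprime.coprime_dvd_right (Dvd.intro _ rfl) haQ
  have haO : ∀ n' ∈ O, Nat.Coprime a (n' - n).natAbs := fun n' hn' =>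
    Nat.Coprime.coprime_dvd_right
      (Dvd.dvd.mul_left (Finset.dvd_prod_of_mem (fun n' : ℤ => (n' - n).natAbs) hn') _) haQ
  let Ba : Set ℕ := {b ∈ B | Nat.Coprime b a}
  have h1 := indep_freeAt hδ Ba O L a ha haL.symm (fun b hb => hb.2) r
    ((-n : ℤ) : ZMod a)
  have h2 : 0 < δ ({m | (L : ℤ) ∣ m - r} ∩ freeAt Ba O) :=
    hpos.trans_le (hδ.mono (Set.inter_subset_inter_right _ (freeAt_anti (fun _ h => h.1) O)))
  -- the residue class `r'` combining `r` modulo `L` and `-n` modulo `a`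
  obtain ⟨r', hr1, hr2⟩ : ∃ r' : ℤ, (L : ℤ) ∣ r' - r ∧ (a : ℤ) ∣ r' + n := by
    have hcopr : IsCoprime (L : ℤ) (a : ℤ) := Nat.isCoprime_iff_coprime.2 haL.symm
    obtain ⟨u, v, huv⟩ := hcopr
    refine ⟨r * v * a + (-n) * u * L, ⟨-(r + n) * u, ?_⟩, ⟨(r + n) * v, ?_⟩⟩
    · linear_combination r * huv
    · linear_combination (-n) * huv
  refine ⟨L * a, r', Nat.mul_pos hL ha, Dvd.intro _ rfl, hr1, ?_, d * a, hAB a haA,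
    Nat.mul_dvd_mul_right hdL a, ?_⟩
  · have h3 : 0 < δ ({m | (L : ℤ) ∣ m - r} ∩ freeAt Ba O) / a := by positivity
    refine (h3.trans_le h1).trans_le (hδ.mono ?_)
    rintro m ⟨⟨hm1, hm2⟩, hm3⟩
    have hm1' : (L : ℤ) ∣ m - r := hm1
    have hm3' : (a : ℤ) ∣ m + n := by
      have h : (m : ZMod a) = ((-n : ℤ) : ZMod a) := hm3
      rw [ZMod.intCast_eq_intCast_iff_dvd_sub] at h
      have := (dvd_neg.2 h)
      exact dvd_of_dvd_of_eq this (by ring)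
    refine ⟨?_, fun n' hn' => ?_⟩
    · change ((L * a : ℕ) : ℤ) ∣ m - r'
      push_cast
      refine IsCoprime.mul_dvd (Nat.isCoprime_iff_coprime.2 haL.symm) ?_ ?_
      · have := dvd_sub hm1' hr1
        exact dvd_of_dvd_of_eq this (by ring)
      · have := dvd_sub hm3' hr2
        exact dvd_of_dvd_of_eq this (by ring)
    · rintro ⟨b, hb, hbm⟩
      by_cases hba : Nat.Coprime b a
      · exact hm2 n' hn' ⟨b, ⟨hb, hba⟩, hbm⟩
      · obtain ⟨p, hp, hpb, hpa⟩ := Nat.Prime.not_coprime_iff_dvd.1 hba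
        have e1 : (p : ℤ) ∣ m + n' := (Int.natCast_dvd_natCast.2 hpb).trans hbm
        have e2 : (p : ℤ) ∣ m + n := (Int.natCast_dvd_natCast.2 hpa).trans hm3'
        have e3 : (p : ℤ) ∣ n' - n := by
          have := dvd_sub e1 e2
          exact dvd_of_dvd_of_eq this (by ring)
        exact Nat.not_coprime_of_dvd_of_dvd hp.one_lt hpa (Int.natCast_dvd.1 e3) (haO n' hn')
  · push_cast
    have h4 : (d : ℤ) ∣ r' + n := by
      have := dvd_add ((Int.natCast_dvd_natCast.2 hdL).trans hr1) hdr
      exact dvd_of_dvd_of_eq this (by ring)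
    refine IsCoprime.mul_dvd (Nat.isCoprime_iff_coprime.2 ?_) h4 hr2
    exact (haL.coprime_dvd_right hdL).symm

/-- All prescribed zeros can be realised at once by elements of `B`. -/
lemma kill_all {δ : Set ℤ → ℝ} (hδ : IsDens δ) (B : Set ℕ) (O Z : Finset ℤ)
    (L : ℕ) (hL : 0 < L) (r : ℤ) (hpos : 0 < δ ({m | (L : ℤ) ∣ m - r} ∩ freeAt B O))
    (hZ : ∀ n ∈ Z, n ∉ O ∧ ∃ d ∈ B ∪ Dset B, d ∣ L ∧ (d : ℤ) ∣ r + n) :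
    ∃ (L' : ℕ) (r' : ℤ), 0 < L' ∧ L ∣ L' ∧ (L : ℤ) ∣ r' - r ∧
      0 < δ ({m | (L' : ℤ) ∣ m - r'} ∩ freeAt B O) ∧
      ∀ n ∈ Z, ∃ b ∈ B, b ∣ L' ∧ (b : ℤ) ∣ r' + n := by
  induction Z using Finset.induction_on with
  | empty => exact ⟨L, r, hL, dvd_rfl, by simp, hpos, by simp⟩
  | insert n Z hn ih =>
    obtain ⟨L1, r1, hL1, hLL1, hr1, hpos1, hZ1⟩ :=
      ih fun n' hn' => hZ n' (Finset.mem_insert_of_mem hn')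
    obtain ⟨hnO, d, hd, hdL, hdr⟩ := hZ n (Finset.mem_insert_self _ _)
    obtain ⟨L2, r2, hL2, hLL2, hr2, hpos2, hb⟩ := kill_one hδ B O L1 hL1 r1 hpos1 n hnO d hd
      (hdL.trans hLL1) (by
        have := dvd_add ((Int.natCast_dvd_natCast.2 hdL).trans hr1) hdr
        exact dvd_of_dvd_of_eq this (by ring))
    refine ⟨L2, r2, hL2, hLL1.trans hLL2, ?_, hpos2, ?_⟩
    · have := dvd_add ((Int.natCast_dvd_natCast.2 hLL1).trans hr2) hr1
      exact dvd_of_dvd_of_eq this (by ring)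
    · intro n' hn'
      rcases Finset.mem_insert.1 hn' with rfl | hn'
      · exact hb
      · obtain ⟨b, hbB, hbL, hbr⟩ := hZ1 n' hn'
        refine ⟨b, hbB, hbL.trans hLL2, ?_⟩
        have := dvd_add ((Int.natCast_dvd_natCast.2 hbL).trans hr2) hbr
        exact dvd_of_dvd_of_eq this (by ring)

/-- Finitary heredity: a pattern with ones `O` and zeros `Z` occurs in the `B`-free set if
the ones occur with positive density in a class modulo `L` in which every zero is forced by
`B ∪ Dset B`. -/
lemma exists_pattern {δ : Set ℤ → ℝ} (hδ : IsDens δ) (B : Set ℕ) (O Z : Finset ℤ)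
    (L : ℕ) (hL : 0 < L) (r : ℤ) (hpos : 0 < δ ({m | (L : ℤ) ∣ m - r} ∩ freeAt B O))
    (hZ : ∀ n ∈ Z, n ∉ O ∧ ∃ d ∈ B ∪ Dset B, d ∣ L ∧ (d : ℤ) ∣ r + n) :
    ∃ m : ℤ, (∀ n ∈ O, m + n ∉ MB B) ∧ ∀ n ∈ Z, m + n ∈ MB B := by
  obtain ⟨L', r', hL', -, -, hpos', hZ'⟩ := kill_all hδ B O Z L hL r hpos hZ
  have hne : ({m | (L' : ℤ) ∣ m - r'} ∩ freeAt B O).Nonempty := by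
    rw [Set.nonempty_iff_ne_empty]
    intro h
    rw [h, hδ.empty] at hpos'
    exact lt_irrefl _ hpos'
  obtain ⟨m, hm1, hm2⟩ := hne
  refine ⟨m, hm2, fun n hn => ?_⟩
  obtain ⟨b, hb, hbL, hbr⟩ := hZ' n hn
  refine ⟨b, hb, ?_⟩
  have hm1' : (L' : ℤ) ∣ m - r' := hm1
  have := dvd_add ((Int.natCast_dvd_natCast.2 hbL).trans hm1') hbr
  exact dvd_of_dvd_of_eq this (by ring)

/-! ### The profinite integers and generic heredity -/

/-- The compact group `∏ ℤ/n` containing the profinite integers. Working in it avoids subtypes;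
measures are asked to be carried by the subgroup `Hsub`. -/
abbrev Ghat : Type := ∀ n : ℕ+, ZMod n

/-- The profinite integers: compatible families of residues. -/
def Hsub : AddSubgroup Ghat where
  carrier := {g | ∀ (m n : ℕ+) (h : (m : ℕ) ∣ n), ZMod.castHom h (ZMod m) (g n) = g m}
  add_mem' := by
    intro a b ha hb m n h
    rw [Pi.add_apply, map_add, ha m n h, hb m n h, Pi.add_apply]
  zero_mem' := by intro m n h; simp
  neg_mem' := by
    intro a ha m n h
    rw [Pi.neg_apply, map_neg, ha m n h, Pi.neg_apply]

lemma isClosed_Hsub : IsClosed (Hsub : Set Ghat) := by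
  have : (Hsub : Set Ghat) = ⋂ (m : ℕ+), ⋂ (n : ℕ+), ⋂ (h : (m : ℕ) ∣ n),
      {g : Ghat | ZMod.castHom h (ZMod m) (g n) = g m} := by
    ext g
    simp only [Set.mem_iInter]
    rfl
  rw [this]
  refine isClosed_iInter fun m => isClosed_iInter fun n => isClosed_iInter fun h => ?_
  exact isClosed_eq (continuous_of_discreteTopology.comp (continuous_apply n)) (continuous_apply m)

lemma one_mem_Hsub : (1 : Ghat) ∈ Hsub := by
  intro m n h; exact map_one _

/-- Probability measures on `Ghat` which are carried by the profinite integers and invariant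
under the odometer `g ↦ g + 1`. Since `1` generates a dense subgroup, this is the Haar measure. -/
structure IsHaar (lam : Measure Ghat) : Prop where
  prob : IsProbabilityMeasure lam
  mem : ∀ᵐ g ∂lam, g ∈ Hsub
  inv : MeasurePreserving (· + (1 : Ghat)) lam lam

lemma exists_haar : ∃ lam : Measure Ghat, IsHaar lam := by
  have : CompactSpace Hsub := isCompact_iff_compactSpace.1 isClosed_Hsub.isCompact
  let ν : Measure Hsub := Measure.addHaarMeasure ⊤
  have hν : IsProbabilityMeasure ν := ⟨Measure.addHaarMeasure_self⟩
  have hm : Measurable (Subtype.val : Hsub → Ghat) := measurable_subtype_coe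
  refine ⟨ν.map Subtype.val, Measure.isProbabilityMeasure_map hm.aemeasurable, ?_, ?_⟩
  · exact ae_map_mem_range Subtype.val (by simpa using isClosed_Hsub.measurableSet) ν |>.mono
      fun g hg => by simpa using hg
  · refine ⟨measurable_id.add_const _, ?_⟩
    have h1 : ν.map (· + (⟨1, one_mem_Hsub⟩ : Hsub)) = ν := map_add_right_eq_self ν _
    have hm' : Measurable (· + (⟨1, one_mem_Hsub⟩ : Hsub)) := measurable_add_const _
    conv_rhs => rw [← h1, Measure.map_map hm hm']
    have hm1 : Measurable (· + (1 : Ghat)) := measurable_id.add_const _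
    rw [Measure.map_map hm1 hm]
    rfl

lemma Hsub_apply {g : Ghat} (hg : g ∈ Hsub) {m n : ℕ+} (h : (m : ℕ) ∣ n) {r : ℤ}
    (hr : (r : ZMod n) = g n) : (r : ZMod m) = g m := by
  rw [← hg m n h, ← hr, map_intCast]

/-- `b ∣ g + n` for some positive `b ∈ B`, for a profinite integer `g`: the profinite version of
`m + n ∈ MB B`. -/
def hits (B : Set ℕ) (g : Ghat) (n : ℤ) : Prop := ∃ b : ℕ+, (b : ℕ) ∈ B ∧ g b + (n : ZMod b) = 0

/-- The profinite closure of a set `P` of integers with period `q`. -/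
def hatq (q : ℕ+) (P : Set ℤ) : Set Ghat := {g | ∃ m : ℤ, (m : ZMod q) = g q ∧ m ∈ P}

/-- `q` is a period of `P`. -/
def PerSet (q : ℕ) (P : Set ℤ) : Prop := ∀ m m' : ℤ, (q : ℤ) ∣ m - m' → (m ∈ P ↔ m' ∈ P)

lemma measurableSet_hatq (q : ℕ+) (P : Set ℤ) : MeasurableSet (hatq q P) := by
  have : hatq q P = (fun g : Ghat => g q) ⁻¹' {t | ∃ m : ℤ, (m : ZMod q) = t ∧ m ∈ P} := rfl
  rw [this]
  exact measurable_pi_apply q MeasurableSet.of_discrete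

lemma mem_hatq {q : ℕ+} {P : Set ℤ} (hP : PerSet q P) {g : Ghat} {m : ℤ}
    (hm : (m : ZMod q) = g q) : g ∈ hatq q P ↔ m ∈ P := by
  constructor
  · rintro ⟨m', h, hm'⟩
    refine (hP m m' ?_).2 hm'
    rw [← hm, ZMod.intCast_eq_intCast_iff_dvd_sub] at h
    exact h
  · exact fun h => ⟨m, hm, h⟩

lemma measurableSet_hits (B : Set ℕ) (n : ℤ) : MeasurableSet {g : Ghat | hits B g n} := by
  have : {g : Ghat | hits B g n} = ⋃ (b : ℕ+) (_ : (b : ℕ) ∈ B),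
      (fun g : Ghat => g b) ⁻¹' {t | t + (n : ZMod b) = 0} := by
    ext g; simp [hits]
  rw [this]
  exact MeasurableSet.iUnion fun b => MeasurableSet.iUnion fun _ =>
    measurable_pi_apply b MeasurableSet.of_discrete

/-- A Haar measure is equidistributed modulo `q`. -/
lemma lam_zmod {lam : Measure Ghat} (hlam : IsHaar lam) (q : ℕ+) (S : Finset (ZMod q)) :
    lam.real {g | g q ∈ S} = S.card / (q : ℕ) := by
  have := hlam.prob
  have hsh : ∀ t : ZMod q, lam.real {g | g q = t + 1} = lam.real {g | g q = t} := by
    intro t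
    have hm' : MeasurableSet ((fun g : Ghat => g q) ⁻¹' ({t + 1} : Set (ZMod q))) :=
      measurable_pi_apply q MeasurableSet.of_discrete
    have hm : MeasurableSet {g : Ghat | g q = t + 1} := hm'
    rw [measureReal_def, ← hlam.inv.measure_preimage hm.nullMeasurableSet, measureReal_def]
    congr 2
    ext g
    simp
  have hall : ∀ t : ZMod q, lam.real {g | g q = t} = lam.real {g | g q = 0} := by
    have : ∀ k : ℕ, lam.real {g : Ghat | g q = (k : ZMod q)} = lam.real {g | g q = 0} := by
      intro k
      induction k with
      | zero => simp
      | succ k ih => rw [Nat.cast_succ, hsh, ih]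
    intro t
    rw [← this t.val]
    simp
  have hsum : ∀ S : Finset (ZMod q), lam.real {g | g q ∈ S} = S.card * lam.real {g | g q = 0} := by
    intro S
    induction S using Finset.induction_on with
    | empty => simp
    | insert t S ht ih =>
      have e : {g : Ghat | g q ∈ insert t S} = {g | g q = t} ∪ {g | g q ∈ S} := by
        ext g; simp
      rw [e, measureReal_union, ih, hall t, Finset.card_insert_of_notMem ht]
      · push_cast; ring
      · rw [Set.disjoint_left]
        intro g h1 h2
        have h1' : g q = t := h1
        exact ht (h1' ▸ h2)
      · exact measurable_pi_apply q (MeasurableSet.of_discrete (s := (S : Set (ZMod q))))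
  have h1 := hsum Finset.univ
  simp only [Finset.mem_univ, Set.ofPred_true, probReal_univ, Finset.card_univ, ZMod.card] at h1
  rw [hsum S]
  have : ((q : ℕ) : ℝ) ≠ 0 := by exact_mod_cast q.ne_zero
  field_simp
  linear_combination (-(S.card : ℝ)) * h1

/-- Periodic sets have the same density in `ℤ` and in the profinite integers. -/
lemma dens_eq_lam {lam : Measure Ghat} (hlam : IsHaar lam) {δ : Set ℤ → ℝ} (hδ : IsDens δ)
    (q : ℕ+) (P : Set ℤ) (hP : PerSet q P) : lam.real (hatq q P) = δ P := by
  let S : Finset (ZMod q) := Finset.univ.filter fun t => ∃ m : ℤ, (m : ZMod q) = t ∧ m ∈ P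
  have h1 : hatq q P = {g | g q ∈ S} := by ext g; simp [hatq, S]
  have h2 : P = (fun m : ℤ => (m : ZMod q)) ⁻¹' S := by
    ext m
    simp only [S, Set.mem_preimage, Finset.coe_filter, Finset.mem_univ, true_and]
    refine ⟨fun h => ⟨m, rfl, h⟩, ?_⟩
    rintro ⟨m', h, hm'⟩
    exact (hP m m' ((ZMod.intCast_eq_intCast_iff_dvd_sub _ _ _).1 h)).2 hm'
  rw [h1, lam_zmod hlam]
  conv_rhs => rw [h2]
  rw [hδ.zmod q q.pos]

/-- The Davenport–Erdős comparison: `B`-free patterns are at least as dense in `ℤ` as in the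
profinite integers. -/
lemma lam_le_dens {lam : Measure Ghat} (hlam : IsHaar lam) {δ : Set ℤ → ℝ} (hδ : IsDens δ)
    (q : ℕ+) (P : Set ℤ) (hP : PerSet q P) (B : Set ℕ) (hB : 0 ∉ B) (O : Finset ℤ) :
    lam.real (hatq q P ∩ {g | ∀ n ∈ O, ¬ hits B g n}) ≤ δ (P ∩ freeAt B O) := by
  have := hlam.prob
  refine le_of_forall_pos_le_add fun ε hε => ?_
  obtain ⟨K, hK⟩ := freeAt_approx hδ B O ε hε
  have hpos : 0 < (q : ℕ) * ∏ b ∈ (cut_finite B K).toFinset, b := by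
    refine Nat.mul_pos q.pos (Finset.prod_pos fun b hb => Nat.pos_of_ne_zero fun h => hB ?_)
    exact h ▸ (cut_subset B K ((cut_finite B K).mem_toFinset.1 hb))
  let q' : ℕ+ := ⟨_, hpos⟩
  have hqq : (q : ℕ) ∣ q' := Dvd.intro _ rfl
  have hbq : ∀ b ∈ cut B K, b ∣ q' := by
    intro b hb
    refine Dvd.dvd.mul_left ?_ _
    exact Finset.dvd_prod_of_mem (fun b => b) ((cut_finite B K).mem_toFinset.2 hb)
  have hper : PerSet q' (P ∩ freeAt (cut B K) O) := by
    intro m m' h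
    refine and_congr (hP m m' ((Int.natCast_dvd_natCast.2 hqq).trans h)) ?_
    refine forall₂_congr fun n _ => not_congr ?_
    have e : m + n = m' + n + (m - m') := by ring
    rw [e]
    exact MB_add_mul (fun b hb => (Int.natCast_dvd_natCast.2 (hbq b hb)).trans h) _
  have h1 : lam.real (hatq q P ∩ {g | ∀ n ∈ O, ¬ hits B g n}) ≤
      lam.real (hatq q' (P ∩ freeAt (cut B K) O)) := by
    refine ENNReal.toReal_mono (by finiteness) (measure_mono_ae ?_)
    filter_upwards [hlam.mem] with g hg
    rintro ⟨h1, h2⟩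
    obtain ⟨m, hm⟩ := ZMod.intCast_surjective (g q')
    refine ⟨m, hm, (mem_hatq hP (Hsub_apply hg hqq hm)).1 h1, ?_⟩
    rintro n hn ⟨b, hb, hbm⟩
    have hb0 : 0 < b := Nat.pos_of_ne_zero fun h => hB (h ▸ cut_subset B K hb)
    refine h2 n hn ⟨⟨b, hb0⟩, cut_subset B K hb, ?_⟩
    rw [← Hsub_apply hg (m := ⟨b, hb0⟩) (hbq b hb) hm, ← Int.cast_add]
    exact (ZMod.intCast_zmod_eq_zero_iff_dvd _ _).2 hbm
  rw [dens_eq_lam hlam hδ q' _ hper] at h1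
  have h2 : δ (P ∩ freeAt (cut B K) O) ≤
      δ (P ∩ freeAt B O) + δ (freeAt (cut B K) O \ freeAt B O) := by
    refine (hδ.mono ?_).trans (hδ.union_le _ _)
    rintro m ⟨h1, h2⟩
    by_cases h : m ∈ freeAt B O
    · exact Or.inl ⟨h1, h⟩
    · exact Or.inr ⟨h2, h⟩
  linarith

lemma perSet_class (L : ℕ) (r : ℤ) : PerSet L {m | (L : ℤ) ∣ m - r} := by
  intro m m' h
  have e : m - r = (m' - r) + (m - m') := by ring
  change (L : ℤ) ∣ m - r ↔ (L : ℤ) ∣ m' - r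
  rw [e]
  exact dvd_add_left h

/-- For almost every profinite `g`, finite sets of ones seen at `g` have positive density in
every residue class of `g`. -/
lemma ae_good {lam : Measure Ghat} (hlam : IsHaar lam) {δ : Set ℤ → ℝ} (hδ : IsDens δ)
    (B : Set ℕ) (hB : 0 ∉ B) :
    ∀ᵐ g ∂lam, ∀ (L : ℕ+) (O : Finset ℤ) (r : ℤ), (r : ZMod L) = g L →
      (∀ n ∈ O, ¬ hits B g n) → 0 < δ ({m | ((L : ℕ) : ℤ) ∣ m - r} ∩ freeAt B O) := by
  have := hlam.prob
  simp only [ae_all_iff]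
  intro L O r
  rcases (hδ.nonneg ({m | ((L : ℕ) : ℤ) ∣ m - r} ∩ freeAt B O)).lt_or_eq with h | h
  · exact ae_of_all _ fun _ _ _ => h
  · have h1 := lam_le_dens hlam hδ L _ (perSet_class L r) B hB O
    rw [← h] at h1
    have h2 : lam (hatq L {m | ((L : ℕ) : ℤ) ∣ m - r} ∩ {g | ∀ n ∈ O, ¬ hits B g n}) = 0 := by
      rw [← measureReal_eq_zero_iff]
      exact le_antisymm h1 measureReal_nonneg
    filter_upwards [measure_eq_zero_iff_ae_notMem.1 h2] with g hg hr hO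
    refine absurd ⟨⟨r, hr, ?_⟩, hO⟩ hg
    simp

lemma mem_orbitClosure {x w : ℤ → Bool} :
    w ∈ orbitClosure x ↔ ∀ O : Finset ℤ, ∃ m : ℤ, ∀ n ∈ O, x (m + n) = w n := by
  constructor
  · intro h O
    have hopen : IsOpen {y : ℤ → Bool | ∀ n ∈ O, y n = w n} := by
      have : {y : ℤ → Bool | ∀ n ∈ O, y n = w n} = ⋂ n ∈ O, (fun y : ℤ → Bool => y n) ⁻¹' {w n} := by
        ext; simp
      rw [this]
      exact isOpen_biInter_finset fun n _ => (isOpen_discrete _).preimage (continuous_apply n)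
    obtain ⟨y, hy, m, rfl⟩ := mem_closure_iff.1 h _ hopen (by simp)
    exact ⟨m, fun n hn => by rw [add_comm]; exact hy n hn⟩
  · intro h
    refine mem_closure_iff.2 fun U hU hw => ?_
    obtain ⟨I, u, hu, hsub⟩ := isOpen_pi_iff.1 hU w hw
    obtain ⟨m, hm⟩ := h I
    refine ⟨fun n => x (n + m), hsub fun n hn => ?_, m, rfl⟩
    change x (n + m) ∈ u n
    rw [add_comm, hm n hn]
    exact (hu n hn).2

lemma eta_eq_true {B : Set ℕ} {n : ℤ} : eta B n = true ↔ n ∉ MB B := by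
  unfold eta
  split_ifs with h
  · exact ⟨fun _ => h, fun _ => rfl⟩
  · exact ⟨fun h' => absurd h' (by decide), fun h' => absurd h' h⟩

lemma eta_eq_false {B : Set ℕ} {n : ℤ} : eta B n = false ↔ n ∈ MB B := by
  unfold eta
  split_ifs with h
  · exact ⟨fun h' => absurd h' (by decide), fun h' => absurd h' h⟩
  · exact ⟨fun _ => not_not.1 h, fun _ => rfl⟩

lemma Bstar_subset (B : Set ℕ) : Bstar B ⊆ B ∪ Dset B := fun _ h => h.1

lemma zero_notMem_Bstar {B : Set ℕ} (hB : 0 ∉ B) : 0 ∉ Bstar B := fun h =>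
  lt_irrefl _ (Dset_pos hB (Bstar_subset B h))

/-- Generic heredity: for almost every `g`, every sequence between the profinite version of
`η*` and that of `η` lies in `X_η`. -/
lemma ae_hereditary {lam : Measure Ghat} (hlam : IsHaar lam) (B : Set ℕ) (hB : 0 ∉ B) :
    ∀ᵐ g ∂lam, ∀ w : ℤ → Bool, (∀ n, w n = true → ¬ hits B g n) →
      (∀ n, w n = false → hits (Bstar B) g n) → w ∈ Xeta B := by
  obtain ⟨δ, hδ⟩ := exists_dens
  filter_upwards [ae_good hlam hδ B hB, hlam.mem] with g hg hgH w h1 h0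
  refine mem_orbitClosure.2 fun I => ?_
  let O := I.filter fun n => w n = true
  let Z := I.filter fun n => w n = false
  have hZ0 : ∀ n ∈ Z, ∃ b : ℕ+, (b : ℕ) ∈ Bstar B ∧ g b + (n : ZMod b) = 0 :=
    fun n hn => h0 n (Finset.mem_filter.1 hn).2
  choose! d hdB hd using hZ0
  -- the residue class of `g` modulo `L` remembers which zeros are forced
  let L : ℕ+ := ∏ n ∈ Z, d n
  obtain ⟨r, hr⟩ := ZMod.intCast_surjective (g L)
  have hpos := hg L O r hr fun n hn => h1 n (Finset.mem_filter.1 hn).2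
  obtain ⟨m, hm1, hm0⟩ := exists_pattern hδ B O Z L L.pos r hpos (fun n hn => by
    refine ⟨fun h => ?_, d n, Bstar_subset B (hdB n hn), ?_, ?_⟩
    · have h1 := (Finset.mem_filter.1 hn).2
      rw [(Finset.mem_filter.1 h).2] at h1
      exact absurd h1 (by decide)
    · exact PNat.dvd_iff.1 (Finset.dvd_prod_of_mem d hn)
    · have := hd n hn
      rw [← Hsub_apply hgH (PNat.dvd_iff.1 (Finset.dvd_prod_of_mem d hn)) hr, ← Int.cast_add] at this
      exact (ZMod.intCast_zmod_eq_zero_iff_dvd _ _).1 this)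
  refine ⟨m, fun n hn => ?_⟩
  rcases h : w n with _ | _
  · exact eta_eq_false.2 (hm0 n (Finset.mem_filter.2 ⟨hn, h⟩))
  · exact eta_eq_true.2 (hm1 n (Finset.mem_filter.2 ⟨hn, h⟩))

/-! ### Periodic approximation of `η*` and `η` -/

lemma PerSet.of_dvd {q q' : ℕ} {P : Set ℤ} (h : PerSet q P) (hq : q ∣ q') : PerSet q' P :=
  fun m m' hm => h m m' ((Int.natCast_dvd_natCast.2 hq).trans hm)

lemma cnt_eq_card (A : Set ℤ) (L : ℕ) :
    cnt A L = (((Finset.Icc (1 : ℤ) L).filter (· ∈ A)).card : ℝ) := by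
  unfold cnt
  rw [Finset.sum_boole]

lemma cnt_mul {q : ℕ} {A : Set ℤ} (hA : PerSet q A) (k : ℕ) : cnt A (q * k) = k * cnt A q := by
  induction k with
  | zero => simp [cnt]
  | succ k ih =>
    have e : Finset.Icc (1 : ℤ) ((q * (k + 1) : ℕ) : ℤ) =
        Finset.Icc (1 : ℤ) ((q * k : ℕ) : ℤ) ∪
          (Finset.Icc (1 : ℤ) q).map (addLeftEmbedding ((q * k : ℕ) : ℤ)) := by
      rw [Finset.map_add_left_Icc]
      ext n
      simp only [Finset.mem_union, Finset.mem_Icc]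
      push_cast
      rw [mul_add, mul_one]
      have h0 : (0 : ℤ) ≤ q := by positivity
      have h1 : (0 : ℤ) ≤ q * k := by positivity
      omega
    have hd : Disjoint (Finset.Icc (1 : ℤ) ((q * k : ℕ) : ℤ))
          ((Finset.Icc (1 : ℤ) q).map (addLeftEmbedding ((q * k : ℕ) : ℤ))) := by
      rw [Finset.map_add_left_Icc, Finset.disjoint_left]
      intro n
      simp only [Finset.mem_Icc]
      omega
    have h2 : ∀ n : ℤ, ((q * k : ℕ) : ℤ) + n ∈ A ↔ n ∈ A := by
      intro n
      refine hA _ _ ?_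
      push_cast
      exact ⟨k, by ring⟩
    unfold cnt at ih ⊢
    rw [e, Finset.sum_union hd, ih, Finset.sum_map]
    simp only [addLeftEmbedding_apply, h2]
    push_cast
    ring

/-- The natural density of a periodic set is its Haar measure. -/
lemma natDensity_eq_lam {lam : Measure Ghat} (hlam : IsHaar lam) (q : ℕ+) {A : Set ℤ}
    (hA : PerSet q A) {d : ℝ} (hd : natDensity A d) : lam.real (hatq q A) = d := by
  have hq : ((q : ℕ) : ℝ) ≠ 0 := by exact_mod_cast q.ne_zero
  have h1 : d = cnt A q / (q : ℕ) := by
    have ht : Tendsto (fun k : ℕ => (q : ℕ) * (k + 1)) atTop atTop :=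
      tendsto_atTop_mono (fun k => (Nat.le_succ k).trans (Nat.le_mul_of_pos_left _ q.pos))
        tendsto_id
    have h := hd.comp ht
    refine tendsto_nhds_unique h ?_
    refine tendsto_const_nhds.congr fun k => ?_
    simp only [Function.comp]
    rw [cnt_mul hA]
    push_cast
    have : (k : ℝ) + 1 ≠ 0 := by positivity
    field_simp
  let T := (Finset.Icc (1 : ℤ) (q : ℕ)).filter (· ∈ A)
  have h2 : hatq q A = {g | g q ∈ T.image (fun m : ℤ => (m : ZMod q))} := by
    ext g
    change (∃ m : ℤ, (m : ZMod q) = g q ∧ m ∈ A) ↔ g q ∈ T.image (fun m : ℤ => (m : ZMod q))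
    rw [Finset.mem_image]
    constructor
    · rintro ⟨m, hm, hmA⟩
      have hqz : (0 : ℤ) < (q : ℕ) := by exact_mod_cast q.pos
      have hdvd : (((q : ℕ) : ℤ)) ∣ m - ((m - 1) % (q : ℕ) + 1) := by
        refine ⟨(m - 1) / (q : ℕ), ?_⟩
        have := Int.mul_ediv_add_emod (m - 1) ((q : ℕ) : ℤ)
        linarith
      refine ⟨(m - 1) % (q : ℕ) + 1, Finset.mem_filter.2 ⟨Finset.mem_Icc.2 ⟨?_, ?_⟩, ?_⟩, ?_⟩
      · linarith [Int.emod_nonneg (m - 1) hqz.ne']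
      · linarith [Int.emod_lt_of_pos (m - 1) hqz]
      · exact (hA _ _ hdvd).1 hmA
      · rw [← hm]
        exact (ZMod.intCast_eq_intCast_iff_dvd_sub _ _ _).2 hdvd
    · rintro ⟨m, hm, h⟩
      exact ⟨m, h, (Finset.mem_filter.1 hm).2⟩
  rw [h2, lam_zmod hlam, h1, cnt_eq_card, Finset.card_image_of_injOn]
  intro a ha b hb hab
  have ha := Finset.mem_Icc.1 (Finset.mem_filter.1 ha).1
  have hb := Finset.mem_Icc.1 (Finset.mem_filter.1 hb).1
  obtain ⟨c, hc⟩ := (ZMod.intCast_eq_intCast_iff_dvd_sub _ _ _).1 hab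
  have := Int.eq_zero_of_abs_lt_dvd (m := (q : ℕ)) (x := b - a) ⟨c, hc⟩ (by rw [abs_lt]; omega)
  omega

lemma hits_mono {B C : Set ℕ} (h : B ⊆ C) {g : Ghat} {n : ℤ} (hg : hits B g n) : hits C g n := by
  obtain ⟨b, hb, h'⟩ := hg
  exact ⟨b, h hb, h'⟩

lemma hits_add (B : Set ℕ) (g : Ghat) (m n : ℤ) : hits B (g + (m : Ghat)) n ↔ hits B g (m + n) := by
  unfold hits
  refine exists_congr fun b => and_congr Iff.rfl ?_
  rw [Int.cast_add, ← add_assoc]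
  rfl

lemma exists_dvd_Bstar {B : Set ℕ} (hB : 0 ∉ B) : ∀ b ∈ B ∪ Dset B, ∃ d ∈ Bstar B, d ∣ b := by
  intro b
  induction b using Nat.strong_induction_on with
  | _ b ih =>
    intro hb
    by_cases h : b ∈ Bstar B
    · exact ⟨b, h, dvd_rfl⟩
    · have : ∃ b' ∈ B ∪ Dset B, b' ∣ b ∧ b' ≠ b := by
        by_contra hc
        push Not at hc
        exact h ⟨hb, hc⟩
      obtain ⟨b', hb', hd, hne⟩ := this
      obtain ⟨d, h1, h2⟩ :=
        ih b' ((Nat.le_of_dvd (Dset_pos hB hb) hd).lt_of_ne hne) hb'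
      exact ⟨d, h1, h2.trans hd⟩

lemma MB_subset_Bstar {B : Set ℕ} (hB : 0 ∉ B) : MB B ⊆ MB (Bstar B) := by
  rintro n ⟨b, hb, h⟩
  obtain ⟨d, hd, hdb⟩ := exists_dvd_Bstar hB b (Or.inl hb)
  exact ⟨d, hd, (Int.natCast_dvd_natCast.2 hdb).trans h⟩

lemma hits_Bstar {B : Set ℕ} (hB : 0 ∉ B) {g : Ghat} (hg : g ∈ Hsub) {n : ℤ} (h : hits B g n) :
    hits (Bstar B) g n := by
  obtain ⟨b, hb, hn⟩ := h
  obtain ⟨d, hd, hdb⟩ := exists_dvd_Bstar hB b (Or.inl hb)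
  have hd0 : 0 < d := Nat.pos_of_dvd_of_pos hdb b.pos
  lift d to ℕ+ using hd0
  have h2 := congrArg (ZMod.castHom hdb (ZMod d)) hn
  rw [map_add, map_zero, map_intCast, hg d b hdb] at h2
  exact ⟨d, hd, h2⟩

lemma mem_Per_add {x : ℤ → Bool} {s : ℕ} {m m' : ℤ} (h : (s : ℤ) ∣ m - m') (hm : m' ∈ Per x s) :
    m ∈ Per x s ∧ x m = x m' := by
  obtain ⟨c, hc⟩ := h
  have e : m = m' + s * c := by linarith
  have h1 : x m = x m' := by rw [e]; exact hm c
  refine ⟨fun k => ?_, h1⟩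
  rw [h1, e, add_assoc, ← mul_add]
  exact hm _

lemma perSet_Per (x : ℤ → Bool) (R : ℕ) (P : Bool → Prop) :
    PerSet R.factorial {i | ∃ s ∈ Finset.Icc 1 R, i ∈ Per x s ∧ P (x i)} := by
  have key : ∀ m m' : ℤ, ((R.factorial : ℕ) : ℤ) ∣ m - m' →
      (∃ s ∈ Finset.Icc 1 R, m' ∈ Per x s ∧ P (x m')) →
      ∃ s ∈ Finset.Icc 1 R, m ∈ Per x s ∧ P (x m) := by
    rintro m m' h ⟨s, hs, h1, h2⟩
    have hsR := Finset.mem_Icc.1 hs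
    have hd : (s : ℤ) ∣ m - m' :=
      (Int.natCast_dvd_natCast.2 (Nat.dvd_factorial hsR.1 hsR.2)).trans h
    obtain ⟨h3, h4⟩ := mem_Per_add hd h1
    exact ⟨s, hs, h3, h4 ▸ h2⟩
  intro m m' h
  exact ⟨key m' m ((dvd_sub_comm).1 h), key m m' h⟩

/-- Two-sided periodic approximation of the pair `η* ≤ η`: a lower one by the periodic part of the
regular Toeplitz sequence `η*`, an upper one by truncating `B`. -/
lemma exists_approx {lam : Measure Ghat} (hlam : IsHaar lam) (B : Set ℕ) (hB : 0 ∉ B)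
    (hreg : RegularToeplitz (etaStar B)) (ε : ℝ) (hε : 0 < ε) :
    ∃ (L : ℕ+) (D V : Set ℤ), PerSet L D ∧ PerSet L V ∧ (∀ m ∈ D, m ∉ MB B) ∧
      (∀ m, m ∉ MB B → m ∈ V) ∧
      lam.real {g | ¬ hits (Bstar B) g 0 ∧ g ∉ hatq L D} ≤ ε ∧
      lam.real {g | hits B g 0 ∧ g ∈ hatq L V} ≤ ε := by
  have := hlam.prob
  obtain ⟨δ, hδ⟩ := exists_dens
  obtain ⟨-, dR, hdR, hlim⟩ := hreg
  obtain ⟨R, hR⟩ := (hlim.eventually (lt_mem_nhds (show 1 - ε < 1 by linarith))).exists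
  -- truncation level: few profinite points are hit by `B` but not by `cut B K`
  let E : ℕ → Set Ghat := fun K => {g | hits B g 0 ∧ ¬ hits (cut B K) g 0}
  have hE : Tendsto (fun K => lam.real (E K)) atTop (𝓝 0) := by
    have h1 : Tendsto (lam ∘ E) atTop (𝓝 (lam (⋂ K, E K))) := by
      refine tendsto_measure_iInter_atTop (fun K => ?_) ?_ ⟨0, by finiteness⟩
      · exact ((measurableSet_hits B 0).inter (measurableSet_hits _ 0).compl).nullMeasurableSet
      · rintro K K' hK g ⟨h1, h2⟩
        have hsub : cut B K ⊆ cut B K' := fun b hb => ⟨hb.1, hb.2.trans hK⟩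
        exact ⟨h1, fun h => h2 (hits_mono hsub h)⟩
    have h2 : ⋂ K, E K = ∅ := by
      refine Set.eq_empty_of_forall_notMem fun g hg => ?_
      rw [Set.mem_iInter] at hg
      obtain ⟨b, hb, h⟩ := (hg 0).1
      exact (hg b).2 ⟨b, ⟨hb, le_rfl⟩, h⟩
    rw [h2, measure_empty] at h1
    exact (ENNReal.tendsto_toReal ENNReal.zero_ne_top).comp h1
  obtain ⟨K, hK⟩ := (hE.eventually (gt_mem_nhds hε)).exists
  have hpos : 0 < R.factorial * ∏ b ∈ (cut_finite B K).toFinset, b := by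
    refine Nat.mul_pos R.factorial_pos (Finset.prod_pos fun b hb => Nat.pos_of_ne_zero fun h =>
      hB ?_)
    exact h ▸ (cut_subset B K ((cut_finite B K).mem_toFinset.1 hb))
  let L : ℕ+ := ⟨_, hpos⟩
  have hRL : R.factorial ∣ L := Dvd.intro _ rfl
  have hbL : ∀ b ∈ cut B K, b ∣ L := by
    intro b hb
    refine Dvd.dvd.mul_left ?_ _
    exact Finset.dvd_prod_of_mem (fun b => b) ((cut_finite B K).mem_toFinset.2 hb)
  -- `U` is the set of positions with a period at most `R`, split into the ones `D` and the zeros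
  -- `D0`; `V` is the set of integers free of the truncation of `B`
  let x := etaStar B
  let A : (Bool → Prop) → Set ℤ := fun P => {i | ∃ s ∈ Finset.Icc 1 R, i ∈ Per x s ∧ P (x i)}
  have hA : ∀ P, PerSet L (A P) := fun P => (perSet_Per x R P).of_dvd hRL
  let D := A (· = true)
  let D0 := A (· = false)
  let U := A (fun _ => True)
  let V : Set ℤ := {m | m ∉ MB (cut B K)}
  refine ⟨L, D, V, hA (· = true), ?_, ?_, ?_, ?_, ?_⟩
  · intro m m' h
    refine not_congr ?_
    have e : m = m' + (m - m') := by ring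
    rw [e]
    exact MB_add_mul (fun b hb => (Int.natCast_dvd_natCast.2 (hbL b hb)).trans h) _
  · rintro m ⟨s, -, -, hm⟩ h
    exact eta_eq_true.1 hm (MB_subset_Bstar hB h)
  · exact fun m hm h => hm (MB_mono (cut_subset B K) h)
  · have hU : lam.real (hatq L U) = dR R := by
      refine natDensity_eq_lam hlam L (hA fun _ => True) ?_
      have e : U = ⋃ s ∈ Finset.Icc 1 R, Per x s := by
        ext i
        simp only [Set.mem_iUnion, exists_prop]
        exact ⟨fun ⟨s, h1, h2, _⟩ => ⟨s, h1, h2⟩, fun ⟨s, h1, h2⟩ => ⟨s, h1, h2, trivial⟩⟩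
      change natDensity U (dR R)
      rw [e]
      exact hdR R
    -- periodic zeros of `η*` are zeros of its profinite version, by comparison of densities
    have hD0 : lam.real (hatq L D0 ∩ {g | ∀ n ∈ ({0} : Finset ℤ), ¬ hits (Bstar B) g n}) ≤ 0 := by
      refine (lam_le_dens hlam hδ L D0 (hA (· = false)) _ (zero_notMem_Bstar hB) {0}).trans ?_
      have e : D0 ∩ freeAt (Bstar B) {0} = ∅ := by
        refine Set.eq_empty_of_forall_notMem ?_
        rintro m ⟨⟨s, -, -, hm⟩, h2⟩
        have := h2 0 (by simp)
        rw [add_zero] at this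
        exact this (eta_eq_false.1 hm)
      rw [e, hδ.empty]
    have hsub : {g | ¬ hits (Bstar B) g 0 ∧ g ∉ hatq L D} ⊆
        (hatq L U)ᶜ ∪ (hatq L D0 ∩ {g | ∀ n ∈ ({0} : Finset ℤ), ¬ hits (Bstar B) g n}) := by
      rintro g ⟨h1, h2⟩
      by_cases h : g ∈ hatq L U
      · right
        obtain ⟨m, hm, s, hs, hp, -⟩ := h
        refine ⟨⟨m, hm, s, hs, hp, ?_⟩, by simpa using h1⟩
        by_contra hc
        exact h2 ⟨m, hm, s, hs, hp, by simpa using hc⟩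
      · exact Or.inl h
    have h1 := (measureReal_mono (μ := lam) hsub).trans (measureReal_union_le _ _)
    rw [probReal_compl_eq_one_sub (measurableSet_hatq L U), hU] at h1
    linarith
  · refine le_trans ?_ hK.le
    refine ENNReal.toReal_mono (by finiteness) (measure_mono_ae ?_)
    filter_upwards [hlam.mem] with g hg
    rintro ⟨h1, m, hm, hmV⟩
    refine ⟨h1, ?_⟩
    rintro ⟨b, hb, h⟩
    refine hmV ⟨b, hb, ?_⟩
    rw [← Hsub_apply hg (hbL b hb) hm, Int.cast_zero, add_zero] at h
    exact (ZMod.intCast_zmod_eq_zero_iff_dvd _ _).1 h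

/-! ### Ergodicity of the odometer times a Bernoulli shift -/

/-- An averaged mixing condition on a generating algebra implies ergodicity: an invariant set `A` is
approximated by sets of the algebra, so its measure satisfies `P A = (P A) ^ 2`. -/
lemma ergodic_of_algebra {X : Type*} [mX : MeasurableSpace X] {P : Measure X}
    [IsProbabilityMeasure P] {S : X → X} (hS : MeasurePreserving S P P) (𝒜 : Set (Set X))
    (halg : IsSetAlgebra 𝒜) (hgen : mX = MeasurableSpace.generateFrom 𝒜)
    (hmix : ∀ C ∈ 𝒜, ∃ s : Finset ℕ, s.Nonempty ∧
      ∑ n ∈ s, P.real (C ∩ S^[n] ⁻¹' C) = s.card * P.real C ^ 2) : Ergodic S P := by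
  refine ⟨hS, ⟨fun A hA hinv => ?_⟩⟩
  have hdense : P.MeasureDense 𝒜 :=
    Measure.MeasureDense.of_generateFrom_isSetAlgebra_finite P halg hgen
  have hinvn : ∀ n, S^[n] ⁻¹' A = A := by
    intro n
    induction n with
    | zero => rfl
    | succ n ih => rw [Function.iterate_succ, Set.preimage_comp, ih, hinv]
  have key : ∀ ε : ℝ, 0 < ε → |P.real A - P.real A ^ 2| ≤ 4 * ε := by
    intro ε hε
    obtain ⟨C, hC, hAC⟩ := hdense.approx A hA (measure_ne_top _ _) ε hε
    have hCm := hdense.measurable C hC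
    have hAC' : P.real (symmDiff C A) ≤ ε := by
      rw [symmDiff_comm]
      exact ENNReal.toReal_le_of_le_ofReal hε.le hAC.le
    obtain ⟨s, hs, hsum⟩ := hmix C hC
    have h1 : |P.real C - P.real A| ≤ ε :=
      (abs_measureReal_sub_le_measureReal_symmDiff hCm.nullMeasurableSet
        hA.nullMeasurableSet).trans (hAC')
    -- `C` approximates the invariant set `A`, hence so do its preimages
    have h2 : ∀ n, |P.real (C ∩ S^[n] ⁻¹' C) - P.real A| ≤ 2 * ε := by
      intro n
      have hSn := hS.iterate n
      have hsub : symmDiff (C ∩ S^[n] ⁻¹' C) A ⊆ symmDiff C A ∪ S^[n] ⁻¹' (symmDiff C A) := by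
        have e : ∀ y, y ∈ S^[n] ⁻¹' (symmDiff C A) ↔
            (y ∈ S^[n] ⁻¹' C ∧ y ∉ A) ∨ (y ∈ A ∧ y ∉ S^[n] ⁻¹' C) := by
          intro y
          conv_rhs => rw [← hinvn n]
          rfl
        intro y hy
        rw [Set.mem_union, e, Set.mem_symmDiff]
        rw [Set.mem_symmDiff, Set.mem_inter_iff] at hy
        tauto
      have h3 : P.real (S^[n] ⁻¹' (symmDiff C A)) = P.real (symmDiff C A) := by
        rw [measureReal_def, hSn.measure_preimage (hCm.symmDiff hA).nullMeasurableSet]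
        rfl
      refine (abs_measureReal_sub_le_measureReal_symmDiff
        (hCm.inter (hSn.measurable hCm)).nullMeasurableSet hA.nullMeasurableSet).trans ?_
      refine (measureReal_mono hsub).trans ((measureReal_union_le _ _).trans ?_)
      rw [h3]
      linarith
    have hc : (0 : ℝ) < s.card := by exact_mod_cast hs.card_pos
    have h4 : |P.real C ^ 2 - P.real A| ≤ 2 * ε := by
      have h5 : s.card * (P.real C ^ 2 - P.real A) =
          ∑ n ∈ s, (P.real (C ∩ S^[n] ⁻¹' C) - P.real A) := by
        rw [Finset.sum_sub_distrib, hsum, Finset.sum_const, nsmul_eq_mul]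
        ring
      have h6 : |(s.card : ℝ) * (P.real C ^ 2 - P.real A)| ≤ s.card * (2 * ε) := by
        rw [h5]
        refine (Finset.abs_sum_le_sum_abs _ _).trans ?_
        refine (Finset.sum_le_card_nsmul _ _ _ fun n _ => h2 n).trans ?_
        rw [nsmul_eq_mul]
      rw [abs_mul, abs_of_pos hc] at h6
      exact le_of_mul_le_mul_left h6 hc
    have hC1 : P.real C ≤ 1 := measureReal_le_one
    have hA1 : P.real A ≤ 1 := measureReal_le_one
    have hC0 : 0 ≤ P.real C := measureReal_nonneg
    have hA0 : 0 ≤ P.real A := measureReal_nonneg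
    have h7 : |P.real C ^ 2 - P.real A ^ 2| ≤ 2 * ε := by
      have e : P.real C ^ 2 - P.real A ^ 2 = (P.real C - P.real A) * (P.real C + P.real A) := by ring
      rw [e, abs_mul, abs_of_nonneg (a := P.real C + P.real A) (by linarith)]
      nlinarith [abs_nonneg (P.real C - P.real A)]
    rw [abs_le] at *
    constructor <;> linarith
  have h0 : P.real A - P.real A ^ 2 = 0 := by
    rw [← abs_eq_zero]
    refine le_antisymm (le_of_forall_pos_le_add fun ε hε => ?_) (abs_nonneg _)
    have := key (ε / 4) (by positivity)
    linarith
  have h1 : P.real A * (1 - P.real A) = 0 := by linarith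
  rw [eventuallyConst_set']
  rcases mul_eq_zero.1 h1 with h | h
  · left
    rw [measureReal_eq_zero_iff] at h
    exact ae_eq_empty.2 h
  · right
    have : P A = 1 := by
      have h' : P.real A = 1 := by linarith
      rw [measureReal_def] at h'
      rw [← ENNReal.ofReal_toReal (measure_ne_top P A), h', ENNReal.ofReal_one]
    exact eventuallyEq_univ.2 ((mem_ae_iff_prob_eq_one hA).2 this)

section
set_option linter.unusedSectionVars false
variable {α : Type} [Fintype α] [MeasurableSpace α] [DiscreteMeasurableSpace α]

/-- The odometer times the Bernoulli shift. -/
def Sm (α : Type) (p : Ghat × (ℤ → α)) : Ghat × (ℤ → α) := (p.1 + 1, fun n => p.2 (n + 1))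

lemma Sm_iterate (n : ℕ) (p : Ghat × (ℤ → α)) :
    (Sm α)^[n] p = (p.1 + (n : Ghat), fun i => p.2 (i + n)) := by
  induction n with
  | zero => simp
  | succ n ih =>
    rw [Function.iterate_succ_apply', ih]
    unfold Sm
    refine Prod.ext ?_ ?_
    · change p.1 + (n : Ghat) + 1 = _
      rw [Nat.cast_succ, add_assoc]
    · funext i
      change p.2 (i + 1 + n) = p.2 (i + ((n + 1 : ℕ) : ℤ))
      rw [show i + 1 + (n : ℤ) = i + ((n + 1 : ℕ) : ℤ) by push_cast; ring]

/-- Product of the Haar measure with the Bernoulli measure of marginal `Q`. -/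
def PP (lam : Measure Ghat) (Q : Measure α) : Measure (Ghat × (ℤ → α)) :=
  lam.prod (Measure.infinitePi fun _ : ℤ => Q)

lemma shift_bernoulli (Q : Measure α) [IsProbabilityMeasure Q] (k : ℤ) :
    MeasurePreserving (fun (ω : ℤ → α) n => ω (n + k)) (Measure.infinitePi fun _ : ℤ => Q)
      (Measure.infinitePi fun _ : ℤ => Q) := by
  refine ⟨by fun_prop, ?_⟩
  exact Measure.map_infinitePi_infinitePi_of_inj (P := fun _ : ℤ => Q) (f := fun n : ℤ => n + k)
    (add_left_injective k)

lemma Sm_mp {lam : Measure Ghat} (hlam : IsHaar lam) (Q : Measure α) [IsProbabilityMeasure Q] :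
    MeasurePreserving (Sm α) (PP lam Q) (PP lam Q) := by
  have := hlam.prob
  exact hlam.inv.prod (shift_bernoulli Q 1)

/-- `C` depends only on the residues modulo divisors of `k` and on the coordinates in `I`. -/
def Dep (k : ℕ+) (I : Finset ℤ) (C : Set (Ghat × (ℤ → α))) : Prop :=
  ∀ p p' : Ghat × (ℤ → α), (∀ q : ℕ+, (q : ℕ) ∣ k → p.1 q = p'.1 q) →
    (∀ i ∈ I, p.2 i = p'.2 i) → (p ∈ C ↔ p' ∈ C)

/-- The sets depending on finitely many coordinates. -/
def cyl (α : Type) : Set (Set (Ghat × (ℤ → α))) := {C | ∃ k I, Dep k I C}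

lemma Dep.mono {k k' : ℕ+} {I I' : Finset ℤ} {C : Set (Ghat × (ℤ → α))} (h : Dep k I C)
    (hk : (k : ℕ) ∣ k') (hI : I ⊆ I') : Dep k' I' C :=
  fun p p' h1 h2 => h p p' (fun q hq => h1 q (hq.trans hk)) fun i hi => h2 i (hI hi)

lemma Dep.measurable {k : ℕ+} {I : Finset ℤ} {C : Set (Ghat × (ℤ → α))} (h : Dep k I C) :
    MeasurableSet C := by
  let T : Finset ℕ+ := (k : ℕ).divisors.attach.image fun d =>
    ⟨d.1, Nat.pos_of_mem_divisors d.2⟩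
  have hT : ∀ q : ℕ+, (q : ℕ) ∣ k → q ∈ T := fun q hq => Finset.mem_image.2
    ⟨⟨q, Nat.mem_divisors.2 ⟨hq, k.ne_zero⟩⟩, Finset.mem_attach _ _, rfl⟩
  let f : Ghat × (ℤ → α) → (∀ q : T, ZMod (q : ℕ+)) × (I → α) :=
    fun p => (fun q => p.1 q, fun i => p.2 i)
  have hf : Measurable f := by fun_prop
  have e : C = f ⁻¹' (f '' C) := by
    refine Set.Subset.antisymm (Set.subset_preimage_image f C) ?_
    rintro p ⟨p', hp', hpp⟩
    refine (h p' p (fun q hq => ?_) fun i hi => ?_).1 hp'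
    · exact congrFun (congrArg Prod.fst hpp) ⟨q, hT q hq⟩
    · exact congrFun (congrArg Prod.snd hpp) ⟨i, hi⟩
  rw [e]
  exact hf (Set.toFinite _).measurableSet

lemma cyl_algebra : IsSetAlgebra (cyl α) where
  empty_mem := ⟨1, ∅, fun _ _ _ _ => Iff.rfl⟩
  compl_mem := fun _ ⟨k, I, h⟩ => ⟨k, I, fun p p' h1 h2 => not_congr (h p p' h1 h2)⟩
  union_mem := by
    rintro s t ⟨k, I, h⟩ ⟨k', I', h'⟩
    refine ⟨k * k', I ∪ I', fun p p' h1 h2 => or_congr ?_ ?_⟩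
    · exact (h.mono (by simp) Finset.subset_union_left) p p' h1 h2
    · exact (h'.mono (by simp) Finset.subset_union_right) p p' h1 h2

lemma cyl_generate : (inferInstance : MeasurableSpace (Ghat × (ℤ → α))) =
    MeasurableSpace.generateFrom (cyl α) := by
  refine le_antisymm ?_ (MeasurableSpace.generateFrom_le fun C ⟨k, I, h⟩ => h.measurable)
  refine sup_le ?_ ?_
  · rw [← measurable_iff_comap_le]
    refine @measurable_pi_lambda _ _ _ (MeasurableSpace.generateFrom (cyl α)) _ _ fun q => ?_
    intro s _
    refine MeasurableSpace.measurableSet_generateFrom ⟨q, ∅, fun p p' h1 _ => ?_⟩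
    change p.1 q ∈ s ↔ p'.1 q ∈ s
    rw [h1 q dvd_rfl]
  · rw [← measurable_iff_comap_le]
    refine @measurable_pi_lambda _ _ _ (MeasurableSpace.generateFrom (cyl α)) _ _ fun i => ?_
    intro s _
    refine MeasurableSpace.measurableSet_generateFrom ⟨1, {i}, fun p p' _ h2 => ?_⟩
    change p.2 i ∈ s ↔ p'.2 i ∈ s
    rw [h2 i (by simp)]

/-- Events depending on disjoint sets of Bernoulli coordinates are independent. -/
lemma indep_cyl (Q : Measure α) [IsProbabilityMeasure Q] (I J : Finset ℤ) (hIJ : Disjoint I J)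
    (U V : Set (ℤ → α)) (hU : ∀ ω ω', (∀ i ∈ I, ω i = ω' i) → (ω ∈ U ↔ ω' ∈ U))
    (hV : ∀ ω ω', (∀ i ∈ J, ω i = ω' i) → (ω ∈ V ↔ ω' ∈ V)) :
    (Measure.infinitePi fun _ : ℤ => Q) (U ∩ V) =
      (Measure.infinitePi fun _ : ℤ => Q) U * (Measure.infinitePi fun _ : ℤ => Q) V := by
  have h := ProbabilityTheory.iIndepFun_infinitePi (P := fun _ : ℤ => Q)
    (X := fun _ (a : α) => a) (fun _ => measurable_id)
  have h2 := h.indepFun_finset I J hIJ (fun i => measurable_pi_apply i)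
  have hrep : ∀ (I : Finset ℤ) (U : Set (ℤ → α)),
      (∀ ω ω', (∀ i ∈ I, ω i = ω' i) → (ω ∈ U ↔ ω' ∈ U)) →
      U = (fun (ω : ℤ → α) (i : I) => ω i) ⁻¹' ((fun (ω : ℤ → α) (i : I) => ω i) '' U) := by
    intro I U hU
    refine Set.Subset.antisymm (Set.subset_preimage_image _ U) ?_
    rintro ω ⟨ω', hω', e⟩
    exact (hU ω' ω fun i hi => congrFun e ⟨i, hi⟩).1 hω'
  rw [hrep I U hU, hrep J V hV]
  exact h2.measure_inter_preimage_eq_mul _ _ (Set.toFinite _).measurableSet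
    (Set.toFinite _).measurableSet

/-- A sum over a full period does not depend on where it starts. -/
lemma sum_periodic {M : Type*} [AddCommMonoid M] (f : ℕ → M) (k : ℕ)
    (hf : ∀ n, f (n + k) = f n) (n : ℕ) :
    ∑ j ∈ Finset.range k, f (n + j) = ∑ j ∈ Finset.range k, f j := by
  induction n with
  | zero => simp
  | succ n ih =>
    rw [← ih]
    rcases k with _ | k
    · simp
    · rw [Finset.sum_range_succ, Finset.sum_range_succ' (fun j => f (n + j)) k]
      congr 1
      · exact Finset.sum_congr rfl fun j _ => by congr 1; omega
      · rw [show n + 1 + k = n + (k + 1) by omega, hf, add_zero]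

lemma iterate_hlam {lam : Measure Ghat} (hlam : IsHaar lam) (n : ℕ) :
    MeasurePreserving (· + (n : Ghat)) lam lam := by
  have h := hlam.inv.iterate n
  have e : (· + (1 : Ghat))^[n] = (· + (n : Ghat)) := by
    induction n with
    | zero => funext g; simp
    | succ n ih =>
      rw [Function.iterate_succ', ih (hlam.inv.iterate n)]
      funext g
      change g + n + 1 = g + ((n + 1 : ℕ) : Ghat)
      rw [Nat.cast_succ, add_assoc]
  rwa [e] at h

/-- Exact mixing on average for cylinders. Beyond the overlap of the windows the Bernoulli
coordinates are independent, and averaging over a full period equidistributes the odometer. -/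
lemma cyl_mix {lam : Measure Ghat} (hlam : IsHaar lam) (Q : Measure α) [IsProbabilityMeasure Q]
    (C : Set (Ghat × (ℤ → α))) (hC : C ∈ cyl α) :
    ∃ s : Finset ℕ, s.Nonempty ∧
      ∑ n ∈ s, (PP lam Q).real (C ∩ (Sm α)^[n] ⁻¹' C) = s.card * (PP lam Q).real C ^ 2 := by
  have := hlam.prob
  obtain ⟨k, I, h⟩ := hC
  have hCm := h.measurable
  let β := Measure.infinitePi fun _ : ℤ => Q
  let F : Ghat → ENNReal := fun g => β (Prod.mk g ⁻¹' C)
  have hF : Measurable F := measurable_measure_prodMk_left hCm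
  have hPC : PP lam Q C = ∫⁻ g, F g ∂lam := Measure.prod_apply hCm
  obtain ⟨n0, hn0⟩ : ∃ n0 : ℕ, ∀ n, n0 ≤ n → Disjoint I (I.map (addRightEmbedding (n : ℤ))) := by
    obtain ⟨b, hb⟩ := I.bddAbove
    obtain ⟨a, ha⟩ := I.bddBelow
    refine ⟨(b - a + 1).toNat, fun n hn => ?_⟩
    rw [Finset.disjoint_left]
    intro i hi hi'
    obtain ⟨i', hi'', e⟩ := Finset.mem_map.1 hi'
    have h1 := hb hi
    have h2 := ha hi''
    have e' : i' + (n : ℤ) = i := e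
    omega
  -- beyond the overlap of the windows the two fibres over a point of the odometer are independent
  have hprod : ∀ n, n0 ≤ n → PP lam Q (C ∩ (Sm α)^[n] ⁻¹' C) = ∫⁻ g, F g * F (g + n) ∂lam := by
    intro n hn
    have hm : MeasurableSet ((Sm α)^[n] ⁻¹' C) := ((Sm_mp hlam Q).iterate n).measurable hCm
    refine (Measure.prod_apply (hCm.inter hm)).trans ?_
    refine lintegral_congr fun g => ?_
    have e : Prod.mk g ⁻¹' ((Sm α)^[n] ⁻¹' C) =
        (fun (ω : ℤ → α) i => ω (i + n)) ⁻¹' (Prod.mk (g + (n : Ghat)) ⁻¹' C) := by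
      ext ω
      change (Sm α)^[n] (g, ω) ∈ C ↔ _
      rw [Sm_iterate]
      rfl
    rw [Set.preimage_inter, e, indep_cyl Q I (I.map (addRightEmbedding (n : ℤ))) (hn0 n hn)]
    · rw [(shift_bernoulli Q n).measure_preimage (hCm.preimage measurable_prodMk_left).nullMeasurableSet]
    · exact fun ω ω' hω => h (g, ω) (g, ω') (fun _ _ => rfl) hω
    · intro ω ω' hω
      refine h (g + n, _) (g + n, _) (fun _ _ => rfl) fun i hi => ?_
      exact hω (i + n) (Finset.mem_map.2 ⟨i, hi, rfl⟩)
  -- the sum along a full period is constant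
  let c : ENNReal := ∑ j ∈ Finset.range k, F ((j : ℕ) : Ghat)
  have hFdep : ∀ g g' : Ghat, (∀ q : ℕ+, (q : ℕ) ∣ k → g q = g' q) → F g = F g' := by
    intro g g' hg
    have e : Prod.mk g ⁻¹' C = Prod.mk g' ⁻¹' C := by
      ext ω
      exact h (g, ω) (g', ω) hg fun _ _ => rfl
    change β _ = β _
    rw [e]
  have hsum : ∀ n0 : ℕ, ∀ᵐ g ∂lam,
      ∑ j ∈ Finset.range k, F (g + ((n0 + j : ℕ) : Ghat)) = c := by
    intro n0
    filter_upwards [hlam.mem] with g hg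
    obtain ⟨r, hr⟩ := ZMod.natCast_zmod_surjective (g k)
    have h1 : ∀ j : ℕ, F (g + (j : Ghat)) = F (((r + j : ℕ)) : Ghat) := by
      intro j
      refine hFdep _ _ fun q hq => ?_
      rw [Nat.cast_add]
      change g q + ((j : Ghat) q) = (r : Ghat) q + ((j : Ghat) q)
      rw [← Hsub_apply hg hq (r := (r : ℤ)) (by rw [← hr]; simp)]
      simp
    simp only [h1, ← add_assoc]
    refine sum_periodic (fun j => F ((j : ℕ) : Ghat)) k (fun n => ?_) (r + n0)
    refine hFdep _ _ fun q hq => ?_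
    change ((n + (k : ℕ) : ℕ) : ZMod q) = ((n : ℕ) : ZMod q)
    rw [Nat.cast_add, (ZMod.natCast_eq_zero_iff (k : ℕ) q).2 hq, add_zero]
  have hFm : ∀ n : ℕ, Measurable fun g => F (g + (n : Ghat)) :=
    fun n => hF.comp (measurable_id.add_const _)
  have hFF : ∀ n : ℕ, Measurable fun g => F g * F (g + (n : Ghat)) := fun n => hF.mul (hFm n)
  have hc : c = k * PP lam Q C := by
    have h1 : ∫⁻ g, ∑ j ∈ Finset.range k, F (g + ((0 + j : ℕ) : Ghat)) ∂lam = c := by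
      rw [lintegral_congr_ae (hsum 0), lintegral_const, measure_univ, mul_one]
    rw [← h1, lintegral_finsetSum _ fun j _ => hFm (0 + j), hPC]
    rw [Finset.sum_congr rfl fun j _ => (iterate_hlam hlam (0 + j)).lintegral_comp hF]
    simp
  have hfin : ∑ j ∈ Finset.range k, PP lam Q (C ∩ (Sm α)^[n0 + j] ⁻¹' C) =
      k * (PP lam Q C * PP lam Q C) := by
    rw [Finset.sum_congr rfl fun j _ => hprod (n0 + j) (Nat.le_add_right _ _),
      ← lintegral_finsetSum _ fun j _ => hFF (n0 + j)]
    simp_rw [← Finset.mul_sum]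
    have h1 : ∀ᵐ g ∂lam, F g * ∑ j ∈ Finset.range k, F (g + ((n0 + j : ℕ) : Ghat)) = F g * c := by
      filter_upwards [hsum n0] with g hg
      rw [hg]
    rw [lintegral_congr_ae h1, lintegral_mul_const _ hF, ← hPC, hc]
    ring
  have hprob : IsProbabilityMeasure (PP lam Q) := by unfold PP; infer_instance
  refine ⟨(Finset.range k).map (addLeftEmbedding n0), ?_, ?_⟩
  · rw [Finset.map_nonempty]
    exact Finset.nonempty_range_iff.2 k.ne_zero
  · rw [Finset.sum_map, Finset.card_map, Finset.card_range]
    have := congrArg ENNReal.toReal hfin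
    rw [ENNReal.toReal_sum (fun _ _ => measure_ne_top _ _)] at this
    rw [ENNReal.toReal_mul, ENNReal.toReal_mul, ENNReal.toReal_natCast] at this
    rw [pow_two]
    exact this

/-- The odometer times a Bernoulli shift is ergodic. -/
lemma Sm_ergodic {lam : Measure Ghat} (hlam : IsHaar lam) (Q : Measure α)
    [IsProbabilityMeasure Q] : Ergodic (Sm α) (PP lam Q) := by
  have := hlam.prob
  have hprob : IsProbabilityMeasure (PP lam Q) := by unfold PP; infer_instance
  exact ergodic_of_algebra (Sm_mp hlam Q) (cyl α) cyl_algebra cyl_generate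
    fun C hC => cyl_mix hlam Q C hC

end

/-! ### Entropy of finite-valued observables -/

/-- Probability that the observable `f` takes the value `b`. -/
def pm {X β : Type*} [MeasurableSpace X] (P : Measure X) (f : X → β) (b : β) : ℝ :=
  P.real (f ⁻¹' {b})

/-- Shannon entropy (in nats) of a finite-valued observable. -/
def HH {X β : Type*} [MeasurableSpace X] [Fintype β] (P : Measure X) (f : X → β) : ℝ :=
  ∑ b, Real.negMulLog (pm P f b)

section
set_option linter.unusedSectionVars false
variable {X : Type*} [MeasurableSpace X] {P : Measure X}
variable {β γ : Type*} [Fintype β] [MeasurableSpace β] [DiscreteMeasurableSpace β]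
  [Fintype γ] [MeasurableSpace γ] [DiscreteMeasurableSpace γ]

lemma pm_nonneg (f : X → β) (b : β) : 0 ≤ pm P f b := measureReal_nonneg

lemma pm_comp [IsFiniteMeasure P] {f : X → β} (hf : Measurable f) (φ : β → γ) (c : γ) :
    pm P (fun x => φ (f x)) c = ∑ b with φ b = c, pm P f b := by
  unfold pm
  rw [sum_measureReal_preimage_singleton _ fun b _ => hf (MeasurableSet.of_discrete)]
  congr 1
  ext x
  simp

lemma sum_pm [IsProbabilityMeasure P] {f : X → β} (hf : Measurable f) : ∑ b, pm P f b = 1 := by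
  unfold pm
  rw [sum_measureReal_preimage_singleton _ fun b _ => hf (MeasurableSet.of_discrete)]
  simp

lemma pm_le_one [IsProbabilityMeasure P] (f : X → β) (b : β) : pm P f b ≤ 1 := measureReal_le_one

lemma HH_nonneg [IsProbabilityMeasure P] (f : X → β) : 0 ≤ HH P f :=
  Finset.sum_nonneg fun b _ => Real.negMulLog_nonneg (pm_nonneg f b) (pm_le_one f b)

/-- Gibbs' inequality, termwise. -/
lemma gibbs {x y : ℝ} (hx : 0 ≤ x) (hy : 0 ≤ y) (h : y = 0 → x = 0) :
    Real.negMulLog x ≤ -x * Real.log y + (y - x) := by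
  rcases hx.eq_or_lt with rfl | hx
  · simpa using hy
  have hy : 0 < y := hy.lt_of_ne fun h' => hx.ne' (h h'.symm)
  have h1 := Real.log_le_sub_one_of_pos (div_pos hy hx)
  rw [Real.log_div hy.ne' hx.ne'] at h1
  have h2 := mul_le_mul_of_nonneg_left h1 hx.le
  have h3 : x * (y / x - 1) = y - x := by field_simp
  rw [Real.negMulLog]
  linarith

/-- Entropy does not increase under factor maps. -/
lemma HH_comp_le [IsFiniteMeasure P] {f : X → β} (hf : Measurable f) (φ : β → γ) :
    HH P (fun x => φ (f x)) ≤ HH P f := by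
  unfold HH
  rw [← Finset.sum_fiberwise (s := Finset.univ) (g := φ) (f := fun b => Real.negMulLog (pm P f b))]
  refine Finset.sum_le_sum fun c _ => ?_
  rw [pm_comp hf, Real.negMulLog, neg_mul, Finset.sum_mul, ← Finset.sum_neg_distrib]
  refine Finset.sum_le_sum fun b hb => ?_
  rw [Real.negMulLog, neg_mul, neg_le_neg_iff]
  rcases (pm_nonneg (P := P) f b).eq_or_lt with h | h
  · rw [← h]; simp
  · refine mul_le_mul_of_nonneg_left (Real.log_le_log h ?_) h.le
    exact Finset.single_le_sum (f := fun b => pm P f b) (fun b _ => pm_nonneg f b) hb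

/-- Subadditivity of entropy, from the inequality of Gibbs. -/
lemma HH_prod_le [IsProbabilityMeasure P] {f : X → β} (hf : Measurable f) {g : X → γ}
    (hg : Measurable g) : HH P (fun x => (f x, g x)) ≤ HH P f + HH P g := by
  have hfg : Measurable fun x => (f x, g x) := hf.prodMk hg
  let p : β × γ → ℝ := pm P fun x => (f x, g x)
  have h1 : ∀ b, pm P f b = ∑ c, p (b, c) := by
    intro b
    have := pm_comp (P := P) hfg Prod.fst b
    rw [show pm P f b = _ from this, Finset.sum_filter, Fintype.sum_prod_type]
    rw [Finset.sum_eq_single b]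
    · simp [p]
    · intro b' _ hb'; simp [hb']
    · simp
  have h2 : ∀ c, pm P g c = ∑ b, p (b, c) := by
    intro c
    have := pm_comp (P := P) hfg Prod.snd c
    rw [show pm P g c = _ from this, Finset.sum_filter, Fintype.sum_prod_type]
    refine Finset.sum_congr rfl fun b _ => ?_
    rw [Finset.sum_eq_single c]
    · simp [p]
    · intro b' _ hb'; simp [hb']
    · simp
  have hp : ∀ b c, 0 ≤ p (b, c) := fun b c => pm_nonneg _ _
  have hterm : ∀ b c, Real.negMulLog (p (b, c)) ≤
      -p (b, c) * Real.log (pm P f b) + -p (b, c) * Real.log (pm P g c) +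
        (pm P f b * pm P g c - p (b, c)) := by
    intro b c
    have hle1 : p (b, c) ≤ pm P f b := by
      rw [h1]; exact Finset.single_le_sum (f := fun c => p (b, c)) (fun c _ => hp b c) (Finset.mem_univ c)
    have hle2 : p (b, c) ≤ pm P g c := by
      rw [h2]; exact Finset.single_le_sum (f := fun b => p (b, c)) (fun b _ => hp b c) (Finset.mem_univ b)
    rcases (hp b c).eq_or_lt with h | h
    · rw [← h]
      simpa using mul_nonneg (pm_nonneg (P := P) f b) (pm_nonneg (P := P) g c)
    · have := gibbs (hp b c) (mul_nonneg (pm_nonneg (P := P) f b) (pm_nonneg (P := P) g c))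
        (fun h' => absurd h' (mul_pos (h.trans_le hle1) (h.trans_le hle2)).ne')
      rw [Real.log_mul (h.trans_le hle1).ne' (h.trans_le hle2).ne'] at this
      linarith
  unfold HH
  rw [Fintype.sum_prod_type]
  refine (Finset.sum_le_sum fun b _ => Finset.sum_le_sum fun c _ => hterm b c).trans (le_of_eq ?_)
  simp only [Finset.sum_add_distrib, Finset.sum_sub_distrib]
  have e1 : ∑ b, ∑ c, -p (b, c) * Real.log (pm P f b) = ∑ b, Real.negMulLog (pm P f b) := by
    refine Finset.sum_congr rfl fun b _ => ?_
    rw [← Finset.sum_mul, Finset.sum_neg_distrib, ← h1, Real.negMulLog]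
  have e2 : ∑ b, ∑ c, -p (b, c) * Real.log (pm P g c) = ∑ c, Real.negMulLog (pm P g c) := by
    rw [Finset.sum_comm]
    refine Finset.sum_congr rfl fun c _ => ?_
    rw [← Finset.sum_mul, Finset.sum_neg_distrib, ← h2, Real.negMulLog]
  have e3 : ∑ b, ∑ c, pm P f b * pm P g c = 1 := by
    simp_rw [← Finset.mul_sum, sum_pm hg, mul_one, sum_pm hf]
  have e4 : ∑ b, ∑ c, p (b, c) = 1 := by
    simp_rw [← h1, sum_pm hf]
  rw [e1, e2, e3, e4]
  ring

lemma HH_le_log_card [IsProbabilityMeasure P] {f : X → β} (hf : Measurable f) :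
    HH P f ≤ Real.log (Fintype.card β) := by
  have hne : Nonempty β := by
    by_contra h
    rw [not_nonempty_iff] at h
    have := sum_pm (P := P) hf
    simp at this
  have hc : (0 : ℝ) < Fintype.card β := by exact_mod_cast Fintype.card_pos
  unfold HH
  have h1 : ∀ b, Real.negMulLog (pm P f b) ≤
      pm P f b * Real.log (Fintype.card β) + ((Fintype.card β : ℝ)⁻¹ - pm P f b) := by
    intro b
    have := gibbs (pm_nonneg (P := P) f b) (y := (Fintype.card β : ℝ)⁻¹) (by positivity)
      (fun h => absurd h (by positivity))
    rw [Real.log_inv] at this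
    linarith
  refine (Finset.sum_le_sum fun b _ => h1 b).trans (le_of_eq ?_)
  rw [Finset.sum_add_distrib, ← Finset.sum_mul, Finset.sum_sub_distrib, sum_pm hf]
  simp [hc.ne']

/-- Concavity of the entropy: the entropy of a mixture dominates the mixture of the entropies. -/
lemma HH_concave {ι : Type*} (s : Finset ι) (c : ι → ℝ) (hc : ∀ i ∈ s, 0 ≤ c i)
    (hc1 : ∑ i ∈ s, c i = 1) (p : ι → β → ℝ) (hp : ∀ i ∈ s, ∀ b, 0 ≤ p i b) (f : X → β)
    (hf : ∀ b, pm P f b = ∑ i ∈ s, c i * p i b) :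
    ∑ i ∈ s, c i * ∑ b, Real.negMulLog (p i b) ≤ HH P f := by
  unfold HH
  simp_rw [Finset.mul_sum]
  rw [Finset.sum_comm]
  refine Finset.sum_le_sum fun b _ => ?_
  rw [hf]
  exact Real.concaveOn_negMulLog.le_map_sum hc hc1 fun i hi => hp i hi b

lemma sum_pi_prod (q : β → ℝ) (hq : ∑ b, q b = 1) (k : ℕ) : ∑ w : Fin k → β, ∏ i, q (w i) = 1 := by
  have := Finset.prod_univ_sum (fun _ : Fin k => (Finset.univ : Finset β)) fun _ b => q b
  simpa [hq] using this.symm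

lemma sum_negMulLog_pi (q : β → ℝ) (hq : ∑ b, q b = 1) (k : ℕ) :
    ∑ w : Fin k → β, Real.negMulLog (∏ i, q (w i)) = k * ∑ b, Real.negMulLog (q b) := by
  induction k with
  | zero => simp
  | succ k ih =>
    rw [← (Fin.consEquiv fun _ : Fin (k + 1) => β).sum_comp, Fintype.sum_prod_type]
    have h1 : ∀ (b : β) (w : Fin k → β),
        Real.negMulLog (∏ i, q ((Fin.consEquiv fun _ : Fin (k + 1) => β) (b, w) i)) =
          (∏ i, q (w i)) * Real.negMulLog (q b) + q b * Real.negMulLog (∏ i, q (w i)) := by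
      intro b w
      rw [Fin.prod_univ_succ, Real.negMulLog_mul]
      simp [Fin.consEquiv]
    simp_rw [h1, Finset.sum_add_distrib, ← Finset.mul_sum, ← Finset.sum_mul, sum_pi_prod q hq, ih, hq]
    push_cast
    ring

lemma HH_bool [IsProbabilityMeasure P] {f : X → Bool} (hf : Measurable f) :
    HH P f = Real.binEntropy (pm P f true) := by
  have h := sum_pm (P := P) hf
  rw [Fintype.sum_bool] at h
  unfold HH
  rw [Fintype.sum_bool, Real.binEntropy_eq_negMulLog_add_negMulLog_one_sub, ← h]
  congr 2
  ring_nf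

lemma HH_pi_le [IsProbabilityMeasure P] (n : ℕ) (f : X → Fin n → β) (hf : Measurable f) :
    HH P f ≤ ∑ i, HH P fun x => f x i := by
  induction n with
  | zero =>
    refine (HH_le_log_card hf).trans ?_
    simp
  | succ n ih =>
    have hf0 : Measurable fun x => f x 0 := by fun_prop
    have hf1 : Measurable fun x (i : Fin n) => f x i.succ := by fun_prop
    have h1 := HH_prod_le (P := P) hf0 hf1
    have h2 := HH_comp_le (P := P) (hf0.prodMk hf1)
      (fun p : β × (Fin n → β) => (Fin.cons p.1 p.2 : Fin (n + 1) → β))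
    have e : (fun x => (Fin.cons (f x 0) (fun i : Fin n => f x i.succ) : Fin (n + 1) → β)) = f := by
      funext x
      exact Fin.cons_self_tail (f x)
    simp only [e] at h2
    rw [Fin.sum_univ_succ]
    have h3 := ih _ hf1
    linarith

end

/-- The initial word of length `n`. -/
def word (n : ℕ) (x : ℤ → Bool) : Fin n → Bool := fun i => x (i : ℕ)

lemma measurable_word (n : ℕ) : Measurable (word n) := by
  unfold word; fun_prop

lemma cylinder_eq {n : ℕ} (w : Fin n → Bool) : cylinder w = word n ⁻¹' {w} := by
  ext x
  rw [Set.mem_preimage, Set.mem_singleton_iff, funext_iff]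
  rfl

/-- Change of base: `blockEntropy` is in bits, `HH` in nats. -/
lemma blockEntropy_eq (μ : Measure (ℤ → Bool)) (n : ℕ) :
    blockEntropy μ n = HH μ (word n) / Real.log 2 := by
  unfold blockEntropy HH pm
  rw [← Finset.sum_neg_distrib, Finset.sum_div]
  refine Finset.sum_congr rfl fun w _ => ?_
  rw [cylinder_eq, Real.negMulLog, Real.logb, measureReal_def]
  ring

lemma measurable_shift : Measurable shift := by unfold shift; fun_prop

lemma shift_iterate (m : ℕ) (x : ℤ → Bool) : shift^[m] x = fun n => x (n + m) := by
  induction m with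
  | zero => simp
  | succ m ih =>
    rw [Function.iterate_succ_apply', ih]
    funext n
    change x (n + 1 + m) = x (n + ((m + 1 : ℕ) : ℤ))
    rw [show n + 1 + (m : ℤ) = n + ((m + 1 : ℕ) : ℤ) by push_cast; ring]

lemma word_subadditive {μ : Measure (ℤ → Bool)} [IsProbabilityMeasure μ]
    (hμ : MeasurePreserving shift μ μ) : Subadditive fun n => HH μ (word n) := by
  intro m n
  have hs : Measurable fun x => word n (shift^[m] x) :=
    (measurable_word n).comp (hμ.iterate m).measurable
  have h1 := HH_prod_le (P := μ) (measurable_word m) hs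
  have h2 := HH_comp_le (P := μ) ((measurable_word m).prodMk hs)
      (fun p : (Fin m → Bool) × (Fin n → Bool) => (Fin.append p.1 p.2 : Fin (m + n) → Bool))
  have e : (fun x => (Fin.append (word m x) (word n (shift^[m] x)) : Fin (m + n) → Bool)) =
      word (m + n) := by
    funext x i
    refine Fin.addCases (fun j => ?_) (fun j => ?_) i
    · rw [Fin.append_left]; rfl
    · rw [Fin.append_right, shift_iterate]
      change x ((j : ℕ) + m) = x ((m + j : ℕ) : ℤ)
      rw [add_comm]; rfl
  simp only [e] at h2
  have h3 : HH μ (fun x => word n (shift^[m] x)) = HH μ (word n) := by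
    unfold HH pm
    refine Finset.sum_congr rfl fun w _ => ?_
    have e : (fun x => word n (shift^[m] x)) ⁻¹' {w} = shift^[m] ⁻¹' (word n ⁻¹' {w}) := rfl
    rw [e, measureReal_def, (hμ.iterate m).measure_preimage
      (measurable_word n MeasurableSet.of_discrete).nullMeasurableSet]
    rfl
  linarith

/-- Fekete's lemma for block entropies: the limit inferior in `measEnt` is a limit, and an infimum. -/
lemma tendsto_measEnt {μ : Measure (ℤ → Bool)} [IsProbabilityMeasure μ]
    (hμ : MeasurePreserving shift μ μ) :
    Tendsto (fun n : ℕ => HH μ (word n) / n) atTop (𝓝 (measEnt μ * Real.log 2)) ∧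
      ∀ n : ℕ, n ≠ 0 → measEnt μ * Real.log 2 ≤ HH μ (word n) / n := by
  have hs := word_subadditive hμ
  have hb : BddBelow (Set.range fun n : ℕ => HH μ (word n) / n) := by
    refine ⟨0, ?_⟩
    rintro _ ⟨n, rfl⟩
    exact div_nonneg (HH_nonneg _) (Nat.cast_nonneg n)
  have h1 := hs.tendsto_lim hb
  have h2 : Tendsto (fun n : ℕ => blockEntropy μ n / n) atTop (𝓝 (hs.lim / Real.log 2)) := by
    refine (h1.div_const (Real.log 2)).congr fun n => ?_
    rw [blockEntropy_eq, div_right_comm]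
  have h3 : measEnt μ * Real.log 2 = hs.lim := by
    have : measEnt μ = hs.lim / Real.log 2 := h2.liminf_eq
    rw [this, div_mul_cancel₀]
    exact (Real.log_pos (by norm_num)).ne'
  rw [h3]
  exact ⟨h1, fun n hn => hs.lim_le_div hb hn⟩

/-! ### The concatenated and corrected process -/

/-- The phase of position `n` in its block. -/
def phase {M : ℕ+} (a : ZMod M) (n : ℤ) : Fin M := ⟨(a + (n : ZMod M)).val, ZMod.val_lt _⟩

/-- Concatenate blocks, cut at the positions `n` with `a + n ≡ 0 [M]`. The block starting at
position `i` is `ω i`, which makes `conc` commute with the shifts; the other entries of `ω` are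
not used. -/
def conc {M : ℕ+} (a : ZMod M) (ω : ℤ → Fin M → Bool) (n : ℤ) : Bool :=
  ω (n - (phase a n : ℕ)) (phase a n)

/-- The concatenated process, with the phase read off the odometer coordinate. -/
def zz {M : ℕ+} (p : Ghat × (ℤ → Fin M → Bool)) : ℤ → Bool := conc (p.1 M) p.2

/-- The corrected sequence: zeros where `B` hits, ones where `B*` does not hit, and the concatenated
sequence elsewhere. -/
def xx (B : Set ℕ) {M : ℕ+} (p : Ghat × (ℤ → Fin M → Bool)) (n : ℤ) : Bool :=
  decide ((zz p n = true ∨ ¬ hits (Bstar B) p.1 n) ∧ ¬ hits B p.1 n)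

/-- A block compatible with the lower and upper periodic approximations: it has ones on `D` and all
its ones lie in `V`. -/
def GoodBlock (D V : Set ℤ) {M : ℕ+} (r : Fin M → Bool) : Prop :=
  ∀ j : Fin M, (((j : ℕ) : ℤ) ∈ D → r j = true) ∧ (r j = true → ((j : ℕ) : ℤ) ∈ V)

lemma measurable_conc {M : ℕ+} (a : ZMod M) : Measurable (conc a) := by
  refine measurable_pi_iff.2 fun n => ?_
  unfold conc
  fun_prop

lemma measurable_zz {M : ℕ+} : Measurable (zz (M := M)) := by
  have h : Measurable fun q : ZMod M × (ℤ → Fin M → Bool) => conc q.1 q.2 :=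
    measurable_from_prod_countable_right fun a => measurable_conc a
  have h2 : Measurable fun p : Ghat × (ℤ → Fin M → Bool) => (p.1 M, p.2) :=
    ((measurable_pi_apply M).comp measurable_fst).prodMk measurable_snd
  exact h.comp h2

lemma measurable_xx (B : Set ℕ) {M : ℕ+} : Measurable (xx B (M := M)) := by
  refine measurable_pi_iff.2 fun n => ?_
  have h1 : MeasurableSet {p : Ghat × (ℤ → Fin M → Bool) | zz p n = true} := by
    have : Measurable fun p : Ghat × (ℤ → Fin M → Bool) => zz p n :=
      (measurable_pi_apply n).comp measurable_zz
    exact this (measurableSet_singleton true)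
  have h2 : ∀ A : Set ℕ, MeasurableSet {p : Ghat × (ℤ → Fin M → Bool) | hits A p.1 n} := fun A =>
    measurable_fst (measurableSet_hits A n)
  refine measurable_to_bool ?_
  have e : (fun p => xx B p n) ⁻¹' {true} =
      ({p : Ghat × (ℤ → Fin M → Bool) | zz p n = true} ∪ {p | hits (Bstar B) p.1 n}ᶜ) ∩
        {p : Ghat × (ℤ → Fin M → Bool) | hits B p.1 n}ᶜ := by
    ext p
    exact decide_eq_true_iff
  rw [e]
  exact (h1.union (h2 _).compl).inter (h2 _).compl

lemma zz_Sm {M : ℕ+} (p : Ghat × (ℤ → Fin M → Bool)) : zz (Sm _ p) = shift (zz p) := by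
  funext n
  have h : phase ((p.1 + 1) M) n = phase (p.1 M) (n + 1) := by
    unfold phase
    have : (p.1 + 1) M + (n : ZMod M) = p.1 M + ((n + 1 : ℤ) : ZMod M) := by
      have : (p.1 + 1) M = p.1 M + 1 := rfl
      rw [this]; push_cast; ring
    simp only [this]
  change p.2 (n - (phase ((p.1 + 1) M) n : ℕ) + 1) (phase ((p.1 + 1) M) n) =
    p.2 (n + 1 - (phase (p.1 M) (n + 1) : ℕ)) (phase (p.1 M) (n + 1))
  rw [h, sub_add_eq_add_sub]

lemma xx_Sm (B : Set ℕ) {M : ℕ+} (p : Ghat × (ℤ → Fin M → Bool)) :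
    xx B (Sm _ p) = shift (xx B p) := by
  funext n
  have h : ∀ A : Set ℕ, hits A (p.1 + 1) n ↔ hits A p.1 (n + 1) := by
    intro A
    have := hits_add A p.1 1 n
    rw [add_comm 1 n] at this
    rw [← this, Int.cast_one]
  have h1 : zz (Sm _ p) n = zz p (n + 1) := congrFun (zz_Sm p) n
  change decide ((zz (Sm _ p) n = true ∨ ¬ hits (Bstar B) (p.1 + 1) n) ∧ ¬ hits B (p.1 + 1) n) =
    decide ((zz p (n + 1) = true ∨ ¬ hits (Bstar B) p.1 (n + 1)) ∧ ¬ hits B p.1 (n + 1))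
  simp only [h, h1]

lemma prob_PP {α : Type} [Fintype α] [MeasurableSpace α] (lam : Measure Ghat)
    (hlam : IsHaar lam) (Q : Measure α) [IsProbabilityMeasure Q] : IsProbabilityMeasure (PP lam Q) := by
  have := hlam.prob
  unfold PP; infer_instance

/-- Lift an almost sure property of the odometer to the product. -/
lemma ae_fst {α : Type} [MeasurableSpace α] {lam : Measure Ghat}
    (hlam : IsHaar lam) (Q : Measure α) [IsProbabilityMeasure Q] {p : Ghat → Prop}
    (h : ∀ᵐ g ∂lam, p g) : ∀ᵐ q ∂(PP lam Q), p q.1 := by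
  have := hlam.prob
  exact Measure.quasiMeasurePreserving_fst.ae h

lemma ae_snd {α : Type} [MeasurableSpace α] {lam : Measure Ghat}
    (hlam : IsHaar lam) (Q : Measure α) [IsProbabilityMeasure Q] {p : α → Prop}
    (h : ∀ᵐ r ∂Q, p r) : ∀ᵐ q ∂(PP lam Q), ∀ n, p (q.2 n) := by
  have := hlam.prob
  refine ae_all_iff.2 fun n => ?_
  have h1 : ∀ᵐ ω ∂(Measure.infinitePi fun _ : ℤ => Q), p (ω n) :=
    (measurePreserving_eval_infinitePi (fun _ : ℤ => Q) n).quasiMeasurePreserving.ae h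
  exact Measure.quasiMeasurePreserving_snd.ae h1

lemma isClosed_Xeta (B : Set ℕ) : IsClosed (Xeta B) := by
  unfold Xeta orbitClosure
  exact isClosed_closure

lemma xx_mem {lam : Measure Ghat} (hlam : IsHaar lam) {B : Set ℕ} (hB : 0 ∉ B) {M : ℕ+}
    (Q : Measure (Fin M → Bool)) [IsProbabilityMeasure Q] :
    ∀ᵐ p ∂(PP lam Q), xx B p ∈ Xeta B := by
  have := hlam.prob
  have hH : ∀ᵐ g ∂lam, g ∈ Hsub := hlam.mem
  filter_upwards [ae_fst hlam Q (ae_hereditary hlam B hB), ae_fst hlam Q hH] with p hp hH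
  refine hp _ (fun n hn => ?_) fun n hn => ?_
  · exact (of_decide_eq_true hn).2
  · have h := of_decide_eq_false hn
    by_contra h'
    exact h ⟨Or.inr h', fun h2 => h' (hits_Bstar hB hH h2)⟩

/-- The law of the corrected process is invariant, ergodic and carried by the `𝓑`-free subshift. -/
lemma map_xx_mem {lam : Measure Ghat} (hlam : IsHaar lam) {B : Set ℕ} (hB : 0 ∉ B) {M : ℕ+}
    (Q : Measure (Fin M → Bool)) [IsProbabilityMeasure Q] :
    (PP lam Q).map (xx B) ∈ InvM (Xeta B) ∧ Ergodic shift ((PP lam Q).map (xx B)) := by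
  have := prob_PP lam hlam Q
  have hm : MeasurePreserving (xx B (M := M)) (PP lam Q) ((PP lam Q).map (xx B)) :=
    (measurable_xx B).measurePreserving _
  have he : Ergodic shift ((PP lam Q).map (xx B)) :=
    hm.ergodic_of_ergodic_semiconj (Sm_ergodic hlam Q) measurable_shift fun p => xx_Sm B p
  have hp : IsProbabilityMeasure ((PP lam Q).map (xx B)) :=
    Measure.isProbabilityMeasure_map (measurable_xx B).aemeasurable
  refine ⟨⟨hp, he.toMeasurePreserving.map_eq, ?_⟩, he⟩
  rw [Measure.map_apply (measurable_xx B) (isClosed_Xeta B).measurableSet]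
  have : (xx B (M := M)) ⁻¹' Xeta B =ᵐ[PP lam Q] Set.univ := by
    rw [eventuallyEq_univ]
    exact xx_mem hlam hB Q
  rw [measure_congr this, measure_univ]

/-- If `L ∣ M`, phases in blocks of length `M` detect membership in sets of period `L`. -/
lemma mem_phase {L M : ℕ+} (hLM : (L : ℕ) ∣ M) {D : Set ℤ} (hD : PerSet L D) {g : Ghat}
    (hg : g ∈ Hsub) : ((phase (g M) 0 : ℕ) : ℤ) ∈ D ↔ g ∈ hatq L D := by
  refine (mem_hatq hD ?_).symm
  refine Hsub_apply hg hLM ?_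
  unfold phase
  simp

/-- The correction changes the zeroth coordinate with small probability. -/
lemma xx_ne_zz {lam : Measure Ghat} (hlam : IsHaar lam) {B : Set ℕ} {L M : ℕ+}
    (hLM : (L : ℕ) ∣ M) {D V : Set ℤ} (hD : PerSet L D) (hV : PerSet L V) {ε : ℝ}
    (h1 : lam.real {g | ¬ hits (Bstar B) g 0 ∧ g ∉ hatq L D} ≤ ε)
    (h2 : lam.real {g | hits B g 0 ∧ g ∈ hatq L V} ≤ ε)
    (Q : Measure (Fin M → Bool)) [IsProbabilityMeasure Q] (hQ : ∀ᵐ r ∂Q, GoodBlock D V r) (n : ℤ) :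
    (PP lam Q).real {p | xx B p n ≠ zz p n} ≤ 2 * ε := by
  have := prob_PP lam hlam Q
  have := hlam.prob
  have h0 : (PP lam Q).real {p | xx B p 0 ≠ zz p 0} ≤ 2 * ε := by
    have hH : ∀ᵐ g ∂lam, g ∈ Hsub := hlam.mem
    have hle : (PP lam Q).real {p | xx B p 0 ≠ zz p 0} ≤ (PP lam Q).real
        (Prod.fst ⁻¹' {g | ¬ hits (Bstar B) g 0 ∧ g ∉ hatq L D} ∪
          Prod.fst ⁻¹' {g | hits B g 0 ∧ g ∈ hatq L V}) := by
      refine ENNReal.toReal_mono (measure_ne_top _ _) (measure_mono_ae ?_)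
      filter_upwards [ae_fst hlam Q hH, ae_snd hlam Q hQ] with p hH hr hp
      have hgood := hr (0 - (phase (p.1 M) 0 : ℕ)) (phase (p.1 M) 0)
      have hz : zz p 0 = p.2 (0 - (phase (p.1 M) 0 : ℕ)) (phase (p.1 M) 0) := rfl
      rw [← hz, mem_phase hLM hD hH, mem_phase hLM hV hH] at hgood
      have hx : xx B p 0 = true ↔ (zz p 0 = true ∨ ¬ hits (Bstar B) p.1 0) ∧ ¬ hits B p.1 0 :=
        decide_eq_true_iff
      have hne : xx B p 0 ≠ zz p 0 := hp
      rcases hb : zz p 0 with _ | _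
      · left
        rw [hb] at hne hx hgood
        have := hx.1 (by simpa using hne)
        refine ⟨?_, fun h => ?_⟩
        · simpa using this.1
        · simpa using hgood.1 h
      · right
        rw [hb] at hne hx hgood
        refine ⟨?_, hgood.2 rfl⟩
        by_contra h
        exact hne (hx.2 ⟨Or.inl rfl, h⟩)
    have hfst : ∀ S : Set Ghat, (PP lam Q).real (Prod.fst ⁻¹' S) = lam.real S := by
      intro S
      have e : Prod.fst ⁻¹' S = S ×ˢ (Set.univ : Set (ℤ → Fin M → Bool)) := by
        ext; simp
      rw [e, measureReal_def, PP, Measure.prod_prod, measure_univ, mul_one]; rfl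
    refine hle.trans ((measureReal_union_le _ _).trans ?_)
    rw [hfst, hfst]
    linarith
  -- the joint law of `xx B p n` and `zz p n` does not depend on `n`
  have hshift : ∀ k : ℤ, (PP lam Q).real {p | xx B p (k + 1) ≠ zz p (k + 1)} =
      (PP lam Q).real {p | xx B p k ≠ zz p k} := by
    intro k
    have hm : MeasurableSet {p : Ghat × (ℤ → Fin M → Bool) | xx B p k ≠ zz p k} := by
      have a1 : Measurable fun p : Ghat × (ℤ → Fin M → Bool) => xx B p k :=
        (measurable_pi_apply k).comp (measurable_xx B)
      have a2 : Measurable fun p : Ghat × (ℤ → Fin M → Bool) => zz p k :=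
        (measurable_pi_apply k).comp measurable_zz
      exact (measurableSet_eq_fun a1 a2).compl
    have e : {p : Ghat × (ℤ → Fin M → Bool) | xx B p (k + 1) ≠ zz p (k + 1)} =
        Sm _ ⁻¹' {p | xx B p k ≠ zz p k} := by
      ext p
      change _ ↔ xx B (Sm _ p) k ≠ zz (Sm _ p) k
      rw [xx_Sm, zz_Sm]
      rfl
    rw [e, measureReal_def, (Sm_mp hlam Q).measure_preimage hm.nullMeasurableSet]
    rfl
  induction n with
  | zero => exact h0
  | succ k ih => rw [hshift]; exact ih
  | pred k ih =>
    rw [← hshift, sub_add_cancel]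
    exact ih

/-! ### Distribution and entropy of the process -/

/-- The i.i.d. process with marginal `Q`. -/
abbrev bern {α : Type} [MeasurableSpace α] (Q : Measure α) : Measure (ℤ → α) :=
  Measure.infinitePi fun _ : ℤ => Q

/-- Disintegration of the concatenated process over the phase. -/
lemma zz_law {lam : Measure Ghat} (hlam : IsHaar lam) {M : ℕ+} (Q : Measure (Fin M → Bool))
    [IsProbabilityMeasure Q] {S : Set (ℤ → Bool)} (hS : MeasurableSet S) :
    (PP lam Q).real (zz ⁻¹' S) = ∑ a : ZMod M, (1 / (M : ℕ) : ℝ) * (bern Q).real (conc a ⁻¹' S) := by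
  have := prob_PP lam hlam Q
  have := hlam.prob
  have e : (zz (M := M)) ⁻¹' S =
      ⋃ a ∈ (Finset.univ : Finset (ZMod M)), ({g : Ghat | g M = a} ×ˢ (conc a ⁻¹' S)) := by
    ext p
    simp only [Finset.mem_univ, Set.iUnion_true, Set.mem_iUnion]
    constructor
    · intro h
      exact ⟨p.1 M, rfl, h⟩
    · rintro ⟨a, h, h'⟩
      have h : p.1 M = a := h
      subst h
      exact h'
  have hms : ∀ a : ZMod M, MeasurableSet {g : Ghat | g M = a} := by
    intro a
    have h : Measurable fun g : Ghat => g M := measurable_pi_apply M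
    exact h (measurableSet_singleton a)
  rw [e, measureReal_biUnion_finset]
  · refine Finset.sum_congr rfl fun a _ => ?_
    have h1 : lam.real {g : Ghat | g M = a} = 1 / (M : ℕ) := by
      have := lam_zmod hlam M {a}
      simpa using this
    rw [← h1, measureReal_def, PP, Measure.prod_prod, ENNReal.toReal_mul]
    rfl
  · intro a _ b _ hab
    refine Set.disjoint_left.2 fun p hp hp' => hab ?_
    have h1 : p.1 M = a := hp.1
    have h2 : p.1 M = b := hp'.1
    exact h1.symm.trans h2
  · intro a _
    exact (hms a).prod (measurable_conc a hS)

lemma phase_of_lt {M : ℕ+} (a : ZMod M) (i : ℕ) (h : a.val + i < M) : (phase a i : ℕ) = a.val + i := by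
  change (a + ((i : ℤ) : ZMod M)).val = a.val + i
  have : a + ((i : ℤ) : ZMod M) = ((a.val + i : ℕ) : ZMod M) := by
    push_cast
    rw [ZMod.natCast_zmod_val]
  rw [this, ZMod.val_natCast, Nat.mod_eq_of_lt h]

/-- Law of an initial word contained in one block. -/
lemma conc_word {M : ℕ+} (Q : Measure (Fin M → Bool)) [IsProbabilityMeasure Q] {N : ℕ}
    (w : Fin N → Bool) (a : ZMod M) (ha : a.val + N ≤ M) :
    (bern Q).real (conc a ⁻¹' (word N ⁻¹' {w})) =
      Q.real {r | ∀ (i : Fin N) (h : a.val + i < M), r ⟨a.val + i, h⟩ = w i} := by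
  have hev := measurePreserving_eval_infinitePi (fun _ : ℤ => Q) (-(a.val : ℤ))
  rw [← hev.measureReal_preimage MeasurableSet.of_discrete.nullMeasurableSet]
  congr 1
  ext ω
  have key : ∀ i : Fin N, ∀ h : a.val + i < M,
      conc a ω ((i : ℕ) : ℤ) = ω (-(a.val : ℤ)) ⟨a.val + i, h⟩ := by
    intro i h
    have hp : phase a ((i : ℕ) : ℤ) = ⟨a.val + i, h⟩ := Fin.ext (phase_of_lt a i h)
    unfold conc
    rw [hp]
    congr 2
    push_cast
    ring
  rw [Set.mem_preimage, Set.mem_preimage, Set.mem_singleton_iff, funext_iff]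
  constructor
  · intro hw i h
    rw [← hw i]
    exact (key i h).symm
  · intro hw i
    have h : a.val + i < M := by omega
    exact (key i h).trans (hw i h)

/-- Entropy of independent blocks. -/
lemma HH_blocks {α : Type} [Fintype α] [MeasurableSpace α] [DiscreteMeasurableSpace α]
    (Q : Measure α) [IsProbabilityMeasure Q] (k : ℕ) (t : Fin k → ℤ) (ht : Function.Injective t) :
    HH (bern Q) (fun ω i => ω (t i)) = k * ∑ r, Real.negMulLog (Q.real {r}) := by
  have hq : ∑ r, Q.real {r} = 1 := by
    exact sum_pm (P := Q) (f := (id : α → α)) measurable_id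
  rw [← sum_negMulLog_pi _ hq]
  unfold HH
  refine Finset.sum_congr rfl fun w _ => ?_
  congr 1
  have e : (fun (ω : ℤ → α) i => ω (t i)) ⁻¹' {w} =
      Set.pi ((Finset.univ.map ⟨t, ht⟩ : Finset ℤ) : Set ℤ)
        (fun n => {r | ∀ i, t i = n → r = w i}) := by
    ext ω
    rw [Set.mem_preimage, Set.mem_singleton_iff, funext_iff]
    constructor
    · intro h n _ i hi
      rw [← hi]; exact h i
    · intro h i
      exact h (t i) (by simp) i rfl
  unfold pm
  rw [e, measureReal_def, Measure.infinitePi_pi (fun _ : ℤ => Q)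
    (fun _ _ => MeasurableSet.of_discrete), Finset.prod_map, ENNReal.toReal_prod]
  refine Finset.prod_congr rfl fun i _ => ?_
  have : {r | ∀ j, t j = t i → r = w j} = {w i} := by
    ext r
    constructor
    · intro h; exact h i rfl
    · intro h j hj
      rw [ht hj]; exact h
  change (Q {r | ∀ j, t j = t i → r = w j}).toReal = _
  rw [this]; rfl

/-- Entropy of words of the concatenation with fixed phase: a word of length `(k + 1) M` contains
at least `k` full blocks. -/
lemma HH_conc {M : ℕ+} (Q : Measure (Fin M → Bool)) [IsProbabilityMeasure Q] (k : ℕ) (a : ZMod M) :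
    (k : ℝ) * ∑ r, Real.negMulLog (Q.real {r}) ≤
      HH (bern Q) (fun ω => word ((k + 1) * M) (conc a ω)) := by
  set s : ℕ := (-a).val with hs
  have hsM : s < M := ZMod.val_lt _
  have hM : 0 < (M : ℕ) := M.pos
  let t : Fin k → ℤ := fun i => s + (i : ℕ) * (M : ℕ)
  have ht : Function.Injective t := by
    intro i j hij
    have h1 : ((i : ℕ) : ℤ) * (M : ℕ) = (j : ℕ) * (M : ℕ) := add_left_cancel hij
    have h2 := mul_right_cancel₀ (by exact_mod_cast hM.ne') h1
    exact Fin.ext (by exact_mod_cast h2)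
  rw [← HH_blocks Q k t ht]
  have hm : Measurable fun ω => word ((k + 1) * M) (conc a ω) :=
    (measurable_word _).comp (measurable_conc a)
  have hidx : ∀ (i : Fin k) (j : Fin M), s + i * M + j < (k + 1) * M := by
    intro i j
    have h1 : (i : ℕ) + 1 ≤ k := i.2
    have h2 : ((i : ℕ) + 1) * M ≤ k * M := Nat.mul_le_mul_right _ h1
    have h3 := j.2
    nlinarith
  have h := HH_comp_le (P := bern Q) hm
    (fun (u : Fin ((k + 1) * M) → Bool) (i : Fin k) (j : Fin M) => u ⟨s + i * M + j, hidx i j⟩)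
  refine le_trans (le_of_eq ?_) h
  congr 1
  funext ω i j
  change ω (t i) j = conc a ω ((s + i * M + j : ℕ) : ℤ)
  have hp : phase a ((s + i * M + j : ℕ) : ℤ) = j := by
    refine Fin.ext ?_
    change (a + (((s + i * M + j : ℕ) : ℤ) : ZMod M)).val = j
    have : a + (((s + i * M + j : ℕ) : ℤ) : ZMod M) = ((j : ℕ) : ZMod M) := by
      push_cast
      rw [hs, ZMod.natCast_zmod_val]
      simp
    rw [this, ZMod.val_natCast, Nat.mod_eq_of_lt j.2]
  unfold conc
  rw [hp]
  congr 1
  have : ((s + i * M + j : ℕ) : ℤ) - (j : ℕ) = t i := by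
    simp only [t]
    push_cast
    ring
  rw [this]

/-- Averaging over the phase keeps the lower bound, by concavity. -/
lemma HH_zz {lam : Measure Ghat} (hlam : IsHaar lam) {M : ℕ+} (Q : Measure (Fin M → Bool))
    [IsProbabilityMeasure Q] (k : ℕ) :
    (k : ℝ) * ∑ r, Real.negMulLog (Q.real {r}) ≤
      HH (PP lam Q) (fun p => word ((k + 1) * M) (zz p)) := by
  have hM : (0 : ℝ) < (M : ℕ) := by exact_mod_cast M.pos
  have h1 : ∑ _a : ZMod M, (1 / (M : ℕ) : ℝ) = 1 := by
    simp [ZMod.card, hM.ne']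
  have h := HH_concave (P := PP lam Q) (Finset.univ : Finset (ZMod M)) (fun _ => (1 / (M : ℕ) : ℝ))
    (fun _ _ => by positivity) h1
    (fun a b => pm (bern Q) (fun ω => word ((k + 1) * M) (conc a ω)) b)
    (fun a _ b => pm_nonneg _ _) (fun p => word ((k + 1) * M) (zz p))
    (fun b => zz_law hlam Q (measurable_word _ MeasurableSet.of_discrete))
  refine le_trans ?_ h
  have h2 : (k : ℝ) * ∑ r, Real.negMulLog (Q.real {r}) =
      ∑ _a : ZMod M, (1 / (M : ℕ) : ℝ) * (k * ∑ r, Real.negMulLog (Q.real {r})) := by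
    rw [← Finset.sum_mul, h1, one_mul]
  rw [h2]
  exact Finset.sum_le_sum fun a _ => mul_le_mul_of_nonneg_left (HH_conc Q k a) (by positivity)

section
variable {X : Type*} [MeasurableSpace X] {P : Measure X} [IsProbabilityMeasure P]
  {x z : X → ℤ → Bool}

/-- Coordinatewise close processes have close word distributions. -/
lemma pm_close {δ : ℝ}
    (h : ∀ n, P.real {p | x p n ≠ z p n} ≤ δ) (N : ℕ) (w : Fin N → Bool) :
    |pm P (fun p => word N (x p)) w - pm P (fun p => word N (z p)) w| ≤ N * δ := by
  have hU : P.real (⋃ i : Fin N, {p | x p ((i : ℕ) : ℤ) ≠ z p ((i : ℕ) : ℤ)}) ≤ N * δ := by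
    refine (measureReal_iUnion_fintype_le _).trans ?_
    refine (Finset.sum_le_sum fun i _ => h _).trans (le_of_eq ?_)
    simp
  have key : ∀ x z : X → ℤ → Bool,
      P.real (⋃ i : Fin N, {p | x p ((i : ℕ) : ℤ) ≠ z p ((i : ℕ) : ℤ)}) ≤ N * δ →
      pm P (fun p => word N (x p)) w ≤ pm P (fun p => word N (z p)) w + N * δ := by
    intro x z hU
    unfold pm
    refine (measureReal_mono ?_).trans ((measureReal_union_le _ _).trans (add_le_add_right hU _))
    intro p hp
    by_cases hc : ∃ i : Fin N, x p ((i : ℕ) : ℤ) ≠ z p ((i : ℕ) : ℤ)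
    · exact Or.inr (Set.mem_iUnion.2 hc)
    · push Not at hc
      left
      have hp : word N (x p) = w := hp
      have : word N (z p) = word N (x p) := funext fun i => (hc i).symm
      exact this.trans hp
  rw [abs_le]
  have h1 := key x z hU
  have h2 := key z x (by simpa only [ne_comm] using hU)
  constructor <;> linarith

/-- Coordinatewise close processes have close word entropies: `z` is recovered from `x` and the
changes, whose entropy per coordinate is at most `binEntropy δ`. -/
lemma HH_close (hx : Measurable x) (hz : Measurable z) {δ : ℝ} (hδ : δ ≤ 1 / 2)
    (h : ∀ n, P.real {p | x p n ≠ z p n} ≤ δ) (N : ℕ) :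
    HH P (fun p => word N (z p)) ≤ HH P (fun p => word N (x p)) + N * Real.binEntropy δ := by
  let e : X → Fin N → Bool := fun p i => xor (x p (i : ℕ)) (z p (i : ℕ))
  have he : Measurable e := by
    refine measurable_pi_iff.2 fun i => ?_
    have : Measurable fun p => (x p ((i : ℕ) : ℤ), z p ((i : ℕ) : ℤ)) :=
      ((measurable_pi_apply _).comp hx).prodMk ((measurable_pi_apply _).comp hz)
    exact (Measurable.of_discrete (f := fun q : Bool × Bool => xor q.1 q.2)).comp this
  have hxw : Measurable fun p => word N (x p) := (measurable_word N).comp hx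
  have h1 := HH_comp_le (P := P) (hxw.prodMk he)
    (fun q : (Fin N → Bool) × (Fin N → Bool) => (fun i => xor (q.1 i) (q.2 i) : Fin N → Bool))
  have h2 : (fun p => (fun i => xor (word N (x p) i) (e p i) : Fin N → Bool)) =
      fun p => word N (z p) := by
    funext p i
    change xor (x p (i : ℕ)) (xor (x p (i : ℕ)) (z p (i : ℕ))) = z p (i : ℕ)
    rw [← Bool.xor_assoc, Bool.xor_self, Bool.false_xor]
  simp only [h2] at h1
  have h3 := HH_prod_le (P := P) hxw he
  have h4 := HH_pi_le (P := P) N e he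
  have h5 : ∑ i : Fin N, HH P (fun p => e p i) ≤ N * Real.binEntropy δ := by
    have : ∀ i : Fin N, HH P (fun p => e p i) ≤ Real.binEntropy δ := by
      intro i
      rw [HH_bool (by fun_prop)]
      have hle : pm P (fun p => e p i) true ≤ δ := by
        refine le_trans (le_of_eq ?_) (h ((i : ℕ) : ℤ))
        unfold pm
        congr 1
        ext p
        change xor (x p (i : ℕ)) (z p (i : ℕ)) = true ↔ x p (i : ℕ) ≠ z p (i : ℕ)
        simp
      have h0 := pm_nonneg (P := P) (fun p => e p i) true
      exact Real.binEntropy_strictMonoOn.monotoneOn ⟨h0, by linarith⟩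
        ⟨h0.trans hle, by linarith⟩ hle
    refine (Finset.sum_le_sum fun i _ => this i).trans (le_of_eq ?_)
    simp
  linarith

end

lemma HH_map {X Y β : Type*} [MeasurableSpace X] [MeasurableSpace Y] [Fintype β]
    [MeasurableSpace β] [DiscreteMeasurableSpace β] {P : Measure X} {f : X → Y} (hf : Measurable f)
    {g : Y → β} (hg : Measurable g) : HH (P.map f) g = HH P (fun x => g (f x)) := by
  unfold HH pm
  refine Finset.sum_congr rfl fun b _ => ?_
  rw [map_measureReal_apply hf (hg MeasurableSet.of_discrete)]
  rfl

/-- The entropy of the corrected process is at least the entropy per symbol of the block law, up to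
`binEntropy δ`. -/
lemma measEnt_xx {lam : Measure Ghat} (hlam : IsHaar lam) {B : Set ℕ} (hB : 0 ∉ B) {M : ℕ+}
    (Q : Measure (Fin M → Bool)) [IsProbabilityMeasure Q] {δ : ℝ} (hδ : δ ≤ 1 / 2)
    (h : ∀ n, (PP lam Q).real {p | xx B p n ≠ zz p n} ≤ δ) :
    (∑ r, Real.negMulLog (Q.real {r})) / (M : ℕ) - Real.binEntropy δ ≤
      measEnt ((PP lam Q).map (xx B)) * Real.log 2 := by
  have := prob_PP lam hlam Q
  have hM : (0 : ℝ) < (M : ℕ) := by exact_mod_cast M.pos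
  obtain ⟨⟨hp, -, -⟩, he⟩ := map_xx_mem hlam hB Q
  have ht := (tendsto_measEnt he.toMeasurePreserving).1
  have hsub : Tendsto (fun k : ℕ => (k + 1) * (M : ℕ)) atTop atTop :=
    tendsto_atTop_mono (fun k => (Nat.le_succ k).trans (Nat.le_mul_of_pos_right _ M.pos)) tendsto_id
  have ht2 := ht.comp hsub
  set H := ∑ r, Real.negMulLog (Q.real {r}) with hH
  have hl : Tendsto (fun k : ℕ => ((k : ℝ) / (k + 1)) * (H / (M : ℕ)) - Real.binEntropy δ) atTop
      (𝓝 (1 * (H / (M : ℕ)) - Real.binEntropy δ)) :=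
    ((tendsto_natCast_div_add_atTop (1 : ℝ)).mul_const _).sub_const _
  rw [one_mul] at hl
  refine le_of_tendsto_of_tendsto' hl ht2 fun k => ?_
  have h1 := HH_zz hlam Q k
  have h2 := HH_close (P := PP lam Q) (measurable_xx B) measurable_zz hδ h ((k + 1) * M)
  simp only [Function.comp]
  rw [HH_map (measurable_xx B) (measurable_word _), le_div_iff₀ (by push_cast; positivity)]
  have h3 := h1.trans h2
  have e : ((k : ℝ) / (k + 1) * (H / (M : ℕ)) - Real.binEntropy δ) * ((k + 1) * (M : ℕ) : ℕ) =
      k * H - ((k + 1) * (M : ℕ) : ℕ) * Real.binEntropy δ := by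
    push_cast
    field_simp
  rw [e]
  linarith

/-! ### The block law of an invariant measure -/

/-- Every long word of the subshift contains a block in phase with the periodic approximations. -/
lemma exists_offset {B : Set ℕ} {L M : ℕ+} {D V : Set ℤ} (hD : PerSet L D) (hV : PerSet L V)
    (hDB : ∀ m ∈ D, m ∉ MB B) (hVB : ∀ m, m ∉ MB B → m ∈ V) (u : Fin (M + L) → Bool) :
    ∃ ρ : Fin L, (∃ x ∈ Xeta B, word (M + L) x = u) →
      GoodBlock D V fun j : Fin M => u ⟨ρ + j, by omega⟩ := by
  by_cases hu : ∃ x ∈ Xeta B, word (M + L) x = u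
  · obtain ⟨x, hx, rfl⟩ := hu
    obtain ⟨m, hm⟩ := mem_orbitClosure.1 hx ((Finset.range (M + L)).image fun n : ℕ => (n : ℤ))
    have hL : (0 : ℤ) < (L : ℕ) := by exact_mod_cast L.pos
    have h0 := Int.emod_nonneg (-m) hL.ne'
    have h1 := Int.emod_lt_of_pos (-m) hL
    refine ⟨⟨((-m) % (L : ℕ)).toNat, by omega⟩, fun _ j => ?_⟩
    set ρ := ((-m) % (L : ℕ)).toNat with hρ
    have hρL : ρ < (L : ℕ) := by omega
    have hdiv : ((L : ℕ) : ℤ) ∣ m + ρ := by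
      have e : (ρ : ℤ) = (-m) % (L : ℕ) := by omega
      have := Int.dvd_self_sub_emod (x := -m) (m := ((L : ℕ) : ℤ))
      rw [e, ← Int.dvd_neg]
      rwa [show -(m + -m % ((L : ℕ) : ℤ)) = -m - -m % ((L : ℕ) : ℤ) by ring]
    have hdiv' : ((L : ℕ) : ℤ) ∣ m + (ρ + j : ℕ) - (j : ℕ) := by
      rwa [show m + ((ρ + j : ℕ) : ℤ) - ((j : ℕ) : ℤ) = m + ρ by push_cast; ring]
    have hval : eta B (m + (ρ + j : ℕ)) = x (ρ + j : ℕ) := by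
      refine hm _ (Finset.mem_image.2 ⟨ρ + j, Finset.mem_range.2 ?_, rfl⟩)
      have := j.2
      omega
    change ((((j : ℕ) : ℤ) ∈ D → x ((ρ + j : ℕ) : ℤ) = true) ∧
      (x ((ρ + j : ℕ) : ℤ) = true → ((j : ℕ) : ℤ) ∈ V))
    rw [← hval, eta_eq_true, ← hD _ _ hdiv', ← hV _ _ hdiv']
    exact ⟨hDB _, hVB _⟩
  · exact ⟨⟨0, L.pos⟩, fun h => absurd h hu⟩

/-- Shifting the window of a `[0,1]`-valued sum by less than `L` and shortening it by `N`. -/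
lemma sum_window (c : ℕ → ℝ) (h0 : ∀ a, 0 ≤ c a) (h1 : ∀ a, c a ≤ 1) {L M N ρ : ℕ} (hρ : ρ < L)
    (hN : N ≤ M) : ∑ a ∈ Finset.range (M - N), c (ρ + a) ≤ ∑ a ∈ Finset.range M, c a + L ∧
      ∑ a ∈ Finset.range M, c a ≤ ∑ a ∈ Finset.range (M - N), c (ρ + a) + (L + N) := by
  have hle : ∀ (s : Finset ℕ) (f : ℕ → ℕ), ∑ a ∈ s, c (f a) ≤ s.card := by
    intro s f
    refine (Finset.sum_le_sum fun a _ => h1 (f a)).trans (le_of_eq ?_)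
    simp
  have hmono : ∀ m n : ℕ, m ≤ n → ∑ a ∈ Finset.range m, c a ≤ ∑ a ∈ Finset.range n, c a :=
    fun m n h => Finset.sum_le_sum_of_subset_of_nonneg (Finset.range_mono h) fun a _ _ => h0 a
  have e1 := Finset.sum_range_add c ρ (M - N)
  have hpos : 0 ≤ ∑ a ∈ Finset.range ρ, c a := Finset.sum_nonneg fun a _ => h0 a
  have hρL : (ρ : ℝ) ≤ L := by exact_mod_cast hρ.le
  constructor
  · have e2 := Finset.sum_range_add c M L
    have h2 := hmono (ρ + (M - N)) (M + L) (by omega)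
    have h3 := hle (Finset.range L) (fun a => M + a)
    rw [Finset.card_range] at h3
    linarith
  · have e2 := Finset.sum_range_add c (ρ + (M - N)) N
    have h2 := hmono M (ρ + (M - N) + N) (by omega)
    have h3 := hle (Finset.range N) (fun a => ρ + (M - N) + a)
    have h4 := hle (Finset.range ρ) (fun a => a)
    rw [Finset.card_range] at h3 h4
    linarith

/-- Law on blocks of length `M` in phase with the approximations, derived from an invariant
measure on the subshift. Its entropy is at least that of the measure on words of length `M`, and its
total subword frequencies are those of the measure, both up to an error independent of `M`. -/
lemma exists_blockLaw {B : Set ℕ} {L M : ℕ+} {D V : Set ℤ} (hD : PerSet L D) (hV : PerSet L V)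
    (hDB : ∀ m ∈ D, m ∉ MB B) (hVB : ∀ m, m ∉ MB B → m ∈ V) {μ : Measure (ℤ → Bool)}
    [IsProbabilityMeasure μ] (hμ : MeasurePreserving shift μ μ) (hX : μ (Xeta B) = 1) :
    ∃ Q : Measure (Fin M → Bool), IsProbabilityMeasure Q ∧ (∀ᵐ r ∂Q, GoodBlock D V r) ∧
      HH μ (word M) ≤ ∑ r, Real.negMulLog (Q.real {r}) +
        (Real.log (L : ℕ) + (L : ℕ) * Real.log 2) ∧
      ∀ (N : ℕ) (w : Fin N → Bool), N ≤ M →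
        |∑ a ∈ Finset.range (M - N),
            Q.real {r | ∀ (i : Fin N) (h : a + i < M), r ⟨a + i, h⟩ = w i} -
          (M : ℕ) * pm μ (word N) w| ≤ (L : ℕ) + N := by
  choose ρ hρ using exists_offset (M := M) hD hV hDB hVB
  let F : (Fin (M + L) → Bool) → Fin M → Bool := fun u j => u ⟨ρ u + j, by omega⟩
  let bl : (ℤ → Bool) → Fin M → Bool := fun x => F (word (M + L) x)
  have hF : Measurable F := Measurable.of_discrete
  have hbl : Measurable bl := hF.comp (measurable_word _)
  have hρm : Measurable fun x : ℤ → Bool => ρ (word (M + L) x) :=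
    (Measurable.of_discrete (f := ρ)).comp (measurable_word _)
  have hblv : ∀ x j, bl x j = x (((ρ (word (M + L) x) : ℕ) + (j : ℕ) : ℕ) : ℤ) := fun x j => rfl
  refine ⟨μ.map bl, Measure.isProbabilityMeasure_map hbl.aemeasurable, ?_, ?_, ?_⟩
  · rw [ae_map_iff hbl.aemeasurable MeasurableSet.of_discrete]
    have : ∀ᵐ x ∂μ, x ∈ Xeta B := by
      rw [← prob_compl_eq_zero_iff (isClosed_Xeta B).measurableSet] at hX
      exact hX
    filter_upwards [this] with x hx
    exact hρ _ ⟨x, hx, rfl⟩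
  · have hQ : ∑ r, Real.negMulLog ((μ.map bl).real {r}) = HH μ bl :=
      HH_map (P := μ) hbl (g := (id : (Fin M → Bool) → Fin M → Bool)) measurable_id
    rw [hQ]
    -- the initial word of length `M` is recovered from the block, its offset and an initial word of
    -- length `L`
    have hm1 : Measurable fun x => (bl x, (ρ (word (M + L) x), word L x)) :=
      hbl.prodMk (hρm.prodMk (measurable_word _))
    have h1 := HH_comp_le (P := μ) hm1
      (fun q : (Fin M → Bool) × (Fin L × (Fin L → Bool)) => (fun i : Fin M =>
        if h : (i : ℕ) < q.2.1 then q.2.2 ⟨i, h.trans q.2.1.2⟩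
        else q.1 ⟨i - q.2.1, by omega⟩ : Fin M → Bool))
    have e : (fun x => (fun i : Fin M =>
        if h : (i : ℕ) < ρ (word (M + L) x) then word L x ⟨i, h.trans (ρ (word (M + L) x)).2⟩
        else bl x ⟨i - ρ (word (M + L) x), by omega⟩ : Fin M → Bool)) = word M := by
      funext x i
      by_cases h : (i : ℕ) < ρ (word (M + L) x)
      · rw [dif_pos h]; rfl
      · rw [dif_neg h, hblv]
        change x _ = x ((i : ℕ) : ℤ)
        congr 2
        change (ρ (word (M + L) x) : ℕ) + ((i : ℕ) - (ρ (word (M + L) x) : ℕ)) = i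
        omega
    simp only [e] at h1
    have h2 := HH_prod_le (P := μ) hbl (hρm.prodMk (measurable_word L))
    have h3 := HH_le_log_card (P := μ) (hρm.prodMk (measurable_word L))
    have hL : (0 : ℝ) < (L : ℕ) := by exact_mod_cast L.pos
    have e3 : Real.log (Fintype.card (Fin L × (Fin L → Bool))) =
        Real.log (L : ℕ) + (L : ℕ) * Real.log 2 := by
      rw [Fintype.card_prod, Fintype.card_fin, Fintype.card_fun, Fintype.card_bool,
        Fintype.card_fin, Nat.cast_mul, Real.log_mul hL.ne' (by positivity), Nat.cast_pow,
        Real.log_pow]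
      norm_num
    rw [e3] at h3
    linarith
  · intro N w hN
    -- `c x a` indicates an occurrence of `w` in `x` at position `a`
    let A : ℕ → Set (ℤ → Bool) := fun a => shift^[a] ⁻¹' (word N ⁻¹' {w})
    have hA : ∀ a, MeasurableSet (A a) := fun a =>
      (measurable_shift.iterate a) (measurable_word N MeasurableSet.of_discrete)
    have hAmem : ∀ a x, x ∈ A a ↔ ∀ i : Fin N, x ((a + i : ℕ) : ℤ) = w i := by
      intro a x
      change word N (shift^[a] x) = w ↔ _
      rw [shift_iterate, funext_iff]
      refine forall_congr' fun i => ?_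
      change x ((i : ℕ) + a) = w i ↔ _
      rw [Nat.cast_add, add_comm]
    let c : (ℤ → Bool) → ℕ → ℝ := fun x a => (A a).indicator 1 x
    have hc0 : ∀ x a, 0 ≤ c x a := fun x a => Set.indicator_nonneg (fun _ _ => zero_le_one) x
    have hc1 : ∀ x a, c x a ≤ 1 := fun x a => Set.indicator_le_self' (fun _ _ => zero_le_one) x
    have hIntg : ∀ S : Set (ℤ → Bool), MeasurableSet S →
        Integrable (S.indicator (1 : (ℤ → Bool) → ℝ)) μ := fun S hS =>
      (integrable_const (1 : ℝ)).indicator hS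
    have hA' : ∀ a, μ.real (A a) = pm μ (word N) w := by
      intro a
      rw [measureReal_def, (hμ.iterate a).measure_preimage
        (measurable_word N MeasurableSet.of_discrete).nullMeasurableSet]
      rfl
    let S : ℕ → Set (ℤ → Bool) := fun a =>
      bl ⁻¹' {r | ∀ (i : Fin N) (h : a + i < M), r ⟨a + i, h⟩ = w i}
    have hS : ∀ a, MeasurableSet (S a) := fun a => hbl MeasurableSet.of_discrete
    have hSc : ∀ x, ∀ a ∈ Finset.range (M - N),
        (S a).indicator (1 : (ℤ → Bool) → ℝ) x = c x ((ρ (word (M + L) x) : ℕ) + a) := by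
      intro x a ha
      have ha := Finset.mem_range.1 ha
      have : x ∈ S a ↔ x ∈ A ((ρ (word (M + L) x) : ℕ) + a) := by
        rw [hAmem]
        refine forall_congr' fun i => ?_
        have hi : a + (i : ℕ) < M := by omega
        rw [add_assoc]
        exact ⟨fun h => h hi, fun h _ => h⟩
      simp only [c, Set.indicator, this]
    have e1 : ∑ a ∈ Finset.range (M - N), (μ.map bl).real
        {r | ∀ (i : Fin N) (h : a + i < M), r ⟨a + i, h⟩ = w i} =
        ∫ x, ∑ a ∈ Finset.range (M - N), (S a).indicator (1 : (ℤ → Bool) → ℝ) x ∂μ := by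
      rw [integral_finsetSum _ fun a _ => hIntg _ (hS a)]
      refine Finset.sum_congr rfl fun a _ => ?_
      rw [map_measureReal_apply hbl MeasurableSet.of_discrete, integral_indicator_one (hS a)]
    have e2 : (M : ℕ) * pm μ (word N) w = ∫ x, ∑ a ∈ Finset.range M, c x a ∂μ := by
      rw [integral_finsetSum _ fun a _ => hIntg _ (hA a)]
      simp only [integral_indicator_one (hA _), hA']
      simp
    have i1 : Integrable (fun x => ∑ a ∈ Finset.range (M - N),
        (S a).indicator (1 : (ℤ → Bool) → ℝ) x) μ :=
      integrable_finsetSum _ fun a _ => hIntg _ (hS a)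
    have i2 : Integrable (fun x => ∑ a ∈ Finset.range M, c x a) μ :=
      integrable_finsetSum _ fun a _ => hIntg _ (hA a)
    rw [e1, e2, ← integral_sub i1 i2]
    have hb : ∀ x, ‖∑ a ∈ Finset.range (M - N), (S a).indicator (1 : (ℤ → Bool) → ℝ) x -
        ∑ a ∈ Finset.range M, c x a‖ ≤ (L : ℕ) + N := by
      intro x
      rw [Finset.sum_congr rfl (hSc x), Real.norm_eq_abs, abs_le]
      have h := sum_window (c x) (hc0 x) (hc1 x) (ρ (word (M + L) x)).2 hN
      have hN0 : (0 : ℝ) ≤ N := Nat.cast_nonneg N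
      constructor <;> linarith [h.1, h.2]
    have := norm_integral_le_of_norm_le_const (μ := μ) (ae_of_all _ hb)
    rwa [probReal_univ, mul_one, Real.norm_eq_abs] at this

/-! ### Ergodic approximation -/

/-- Word frequencies of the concatenated process in terms of the block law. -/
lemma zz_word {lam : Measure Ghat} (hlam : IsHaar lam) {M : ℕ+} (Q : Measure (Fin M → Bool))
    [IsProbabilityMeasure Q] {N : ℕ} (hN : N ≤ M) (w : Fin N → Bool) :
    |(M : ℕ) * pm (PP lam Q) (fun p => word N (zz p)) w - ∑ a ∈ Finset.range (M - N),
      Q.real {r | ∀ (i : Fin N) (h : a + i < M), r ⟨a + i, h⟩ = w i}| ≤ N := by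
  have hM : (0 : ℝ) < (M : ℕ) := by exact_mod_cast M.pos
  set f : ℕ → ℝ := fun a => (bern Q).real (conc (a : ZMod M) ⁻¹' (word N ⁻¹' {w})) with hf
  have e1 : (M : ℕ) * pm (PP lam Q) (fun p => word N (zz p)) w = ∑ a ∈ Finset.range M, f a := by
    have h := zz_law hlam Q (measurable_word N (MeasurableSet.of_discrete (s := {w})))
    have h' : pm (PP lam Q) (fun p => word N (zz p)) w = _ := h
    rw [h', ← Finset.mul_sum, ← mul_assoc, mul_one_div_cancel hM.ne', one_mul]
    refine Finset.sum_nbij' ZMod.val (fun a => (a : ZMod M)) ?_ ?_ ?_ ?_ ?_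
    · intro a _; exact Finset.mem_range.2 (ZMod.val_lt a)
    · intro a _; exact Finset.mem_univ _
    · intro a _; exact ZMod.natCast_zmod_val a
    · intro a ha; exact ZMod.val_cast_of_lt (Finset.mem_range.1 ha)
    · intro a _
      simp only [hf, ZMod.natCast_zmod_val]
  have e2 : ∑ a ∈ Finset.range M, f a = ∑ a ∈ Finset.range (M - N), f a +
      ∑ a ∈ Finset.range N, f (M - N + a) := by
    rw [← Finset.sum_range_add, Nat.sub_add_cancel hN]
  have e3 : ∑ a ∈ Finset.range (M - N), f a = ∑ a ∈ Finset.range (M - N),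
      Q.real {r | ∀ (i : Fin N) (h : a + i < M), r ⟨a + i, h⟩ = w i} := by
    refine Finset.sum_congr rfl fun a ha => ?_
    have ha := Finset.mem_range.1 ha
    have hv : (a : ZMod M).val = a := ZMod.val_cast_of_lt (by omega)
    have := conc_word Q w (a : ZMod M) (by rw [hv]; omega)
    simpa only [hv] using this
  have h0 : 0 ≤ ∑ a ∈ Finset.range N, f (M - N + a) :=
    Finset.sum_nonneg fun a _ => measureReal_nonneg
  have h1 : ∑ a ∈ Finset.range N, f (M - N + a) ≤ N := by
    refine (Finset.sum_le_sum fun a _ => (measureReal_le_one : f (M - N + a) ≤ 1)).trans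
      (le_of_eq ?_)
    simp
  rw [e1, e2, e3, add_sub_cancel_left, abs_of_nonneg h0]
  exact h1

/-- Ergodic approximation in word frequencies without essential loss of entropy, by the law of the
corrected process for long blocks. -/
lemma exists_ergodic_approx {B : Set ℕ} (hB : 0 ∉ B) (hreg : RegularToeplitz (etaStar B))
    {μ : Measure (ℤ → Bool)} (hμ : μ ∈ InvM (Xeta B)) (K : ℕ) {ε : ℝ} (hε : 0 < ε) :
    ∃ ν : Measure (ℤ → Bool), (ν ∈ InvM (Xeta B) ∧ Ergodic shift ν) ∧
      (∀ N ≤ K, ∀ w : Fin N → Bool, |pm ν (word N) w - pm μ (word N) w| ≤ ε) ∧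
      measEnt μ * Real.log 2 - ε ≤ measEnt ν * Real.log 2 := by
  obtain ⟨hprob, hinv, hX⟩ := hμ
  have hmp : MeasurePreserving shift μ μ := ⟨measurable_shift, hinv⟩
  obtain ⟨lam, hlam⟩ := exists_haar
  -- `δ` bounds the proportion of coordinates altered by the correction
  have hδ : ∃ δ : ℝ, 0 < δ ∧ δ ≤ 1 / 2 ∧ K * δ ≤ ε / 2 ∧ Real.binEntropy δ ≤ ε / 2 := by
    have t1 : Tendsto (fun δ : ℝ => δ) (𝓝[>] 0) (𝓝 0) := nhdsWithin_le_nhds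
    have t2 : Tendsto (fun δ : ℝ => K * δ) (𝓝[>] 0) (𝓝 0) := by
      simpa using t1.const_mul (K : ℝ)
    have t3 : Tendsto (fun δ : ℝ => Real.binEntropy δ) (𝓝[>] 0) (𝓝 0) := by
      have := Real.binEntropy_continuous.tendsto 0
      rw [Real.binEntropy_zero] at this
      exact this.comp t1
    have hε2 : (0 : ℝ) < ε / 2 := by positivity
    have h1 := t1.eventually (ge_mem_nhds (show (0 : ℝ) < 1 / 2 by norm_num))
    have h2 := t2.eventually (ge_mem_nhds hε2)
    have h3 := t3.eventually (ge_mem_nhds hε2)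
    have h0 : ∀ᶠ δ : ℝ in 𝓝[>] 0, 0 < δ := self_mem_nhdsWithin
    obtain ⟨δ, a, b, c, d⟩ := (h0.and (h1.and (h2.and h3))).exists
    exact ⟨δ, a, b, c, d⟩
  obtain ⟨δ, hδ0, hδ1, hδK, hδε⟩ := hδ
  obtain ⟨L, D, V, hD, hV, hDB, hVB, hlD, hlV⟩ := exists_approx hlam B hB hreg (δ / 2) (by positivity)
  -- the block length `M` is a multiple of `L` which dominates the boundary errors, collected in `C`
  have hL : (0 : ℝ) < (L : ℕ) := by exact_mod_cast L.pos
  have hL1 : (1 : ℝ) ≤ (L : ℕ) := by exact_mod_cast L.pos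
  set C : ℝ := (Real.log (L : ℕ) + (L : ℕ) * Real.log 2) + ((L : ℕ) + 2 * K) with hC
  obtain ⟨k, hk⟩ := exists_nat_gt (C / (ε / 2))
  set M : ℕ+ := L * (k + 1 + K).toPNat' with hMdef
  have hMn : (M : ℕ) = L * (k + 1 + K) := by
    rw [hMdef, PNat.mul_coe, Nat.toPNat'_coe, if_pos (by omega)]
  have hLM : (L : ℕ) ∣ M := ⟨_, hMn⟩
  have hlog : 0 ≤ Real.log (L : ℕ) + (L : ℕ) * Real.log 2 :=
    add_nonneg (Real.log_nonneg hL1) (mul_nonneg hL.le (Real.log_nonneg (by norm_num)))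
  have hM : (0 : ℝ) < (M : ℕ) := by exact_mod_cast M.pos
  have hKM : K ≤ (M : ℕ) := by
    rw [hMn]
    have := L.pos
    nlinarith
  have hCM : C ≤ ε / 2 * (M : ℕ) := by
    have h1 : C < k * (ε / 2) := (div_lt_iff₀ (by positivity)).1 hk
    have h2 : (k : ℝ) ≤ (M : ℕ) := by
      have : k ≤ (M : ℕ) := by
        rw [hMn]
        have := L.pos
        nlinarith
      exact_mod_cast this
    nlinarith
  obtain ⟨Q, hQp, hQg, hQH, hQN⟩ := exists_blockLaw (M := M) hD hV hDB hVB hmp hX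
  have hne : ∀ n, (PP lam Q).real {p | xx B p n ≠ zz p n} ≤ δ := fun n =>
    (xx_ne_zz hlam hLM hD hV hlD hlV Q hQg n).trans (by linarith)
  have := prob_PP lam hlam Q
  refine ⟨(PP lam Q).map (xx B), map_xx_mem hlam hB Q, fun N hN w => ?_, ?_⟩
  · have hNM : N ≤ M := hN.trans hKM
    have hNK : (N : ℝ) ≤ K := by exact_mod_cast hN
    have h1 := zz_word hlam Q hNM w
    have h2 := hQN N w hNM
    have h3 := pm_close (P := PP lam Q) hne N w
    have e : pm ((PP lam Q).map (xx B)) (word N) w = pm (PP lam Q) (fun p => word N (xx B p)) w := by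
      unfold pm
      rw [map_measureReal_apply (measurable_xx B) (measurable_word N MeasurableSet.of_discrete)]
      rfl
    rw [e]
    have h4 : |pm (PP lam Q) (fun p => word N (zz p)) w - pm μ (word N) w| ≤ ε / 2 := by
      have h5 := (abs_sub_le _ _ _).trans (add_le_add h1 h2)
      rw [← mul_sub, abs_mul, abs_of_pos hM] at h5
      have h6 : (M : ℕ) * |pm (PP lam Q) (fun p => word N (zz p)) w - pm μ (word N) w| ≤
          (M : ℕ) * (ε / 2) := by linarith
      exact le_of_mul_le_mul_left h6 hM
    have h7 := (abs_sub_le _ _ _).trans (add_le_add h3 h4)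
    have h8 : (N : ℝ) * δ ≤ K * δ := mul_le_mul_of_nonneg_right hNK hδ0.le
    linarith
  · have h1 := measEnt_xx hlam hB Q hδ1 hne
    have h2 := (tendsto_measEnt hmp).2 M M.ne_zero
    have h3 : measEnt μ * Real.log 2 - ε / 2 ≤ (∑ r, Real.negMulLog (Q.real {r})) / (M : ℕ) := by
      rw [le_div_iff₀ hM]
      rw [le_div_iff₀ hM] at h2
      have hK0 : (0 : ℝ) ≤ K := Nat.cast_nonneg K
      nlinarith
    linarith

/-! ### Weak-star convergence and conclusion -/

/-- Restriction to the window `[-N, N)`, extended by `false`. -/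
def trunc (N : ℕ) (x : ℤ → Bool) (n : ℤ) : Bool := if -(N : ℤ) ≤ n ∧ n < N then x n else false

/-- Continuous functions are nearly determined by the coordinates in a finite window. -/
lemma trunc_close (f : C((ℤ → Bool), ℝ)) {ε : ℝ} (hε : 0 < ε) :
    ∃ N, ∀ x, |f x - f (trunc N x)| ≤ ε := by
  by_contra! h
  choose y hy using h
  obtain ⟨a, φ, hφ, ha⟩ := CompactSpace.tendsto_subseq y
  have hb : Tendsto (fun k => trunc (φ k) (y (φ k))) atTop (𝓝 a) := by
    rw [tendsto_pi_nhds] at ha ⊢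
    intro n
    refine (ha n).congr' ?_
    filter_upwards [eventually_gt_atTop n.natAbs] with k hk
    have : k ≤ φ k := hφ.id_le k
    unfold trunc
    rw [if_pos (by omega)]
    rfl
  have h1 := ((f.continuous.tendsto a).comp ha).sub ((f.continuous.tendsto a).comp hb)
  rw [sub_self] at h1
  have h2 := h1.abs
  rw [abs_zero] at h2
  obtain ⟨k, hk⟩ := (h2.eventually (gt_mem_nhds hε)).exists
  exact (hy (φ k)).not_gt hk

/-- A continuous function is uniformly close, up to a shift, to a function of an initial word. -/
lemma exists_word_approx (f : C((ℤ → Bool), ℝ)) {ε : ℝ} (hε : 0 < ε) :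
    ∃ (N : ℕ) (F : (Fin (2 * N) → Bool) → ℝ),
      ∀ x, |f (shift^[N] x) - F (word (2 * N) x)| ≤ ε := by
  obtain ⟨N, hN⟩ := trunc_close f hε
  refine ⟨N, fun w => f fun n => if h : -(N : ℤ) ≤ n ∧ n < N then w ⟨(n + N).toNat, by omega⟩
    else false, fun x => ?_⟩
  have e : (fun n : ℤ => if h : -(N : ℤ) ≤ n ∧ n < N then
      word (2 * N) x ⟨(n + N).toNat, by omega⟩ else false) = trunc N (shift^[N] x) := by
    funext n
    rw [shift_iterate]
    unfold trunc
    by_cases h : -(N : ℤ) ≤ n ∧ n < N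
    · rw [dif_pos h, if_pos h]
      change x _ = x _
      congr 1
      change ((n + N).toNat : ℤ) = _
      omega
    · rw [dif_neg h, if_neg h]
  change |f (shift^[N] x) - f _| ≤ ε
  rw [e]
  exact hN _

/-- Integrals against invariant measures are determined up to `ε` by word frequencies. -/
lemma integral_close (f : C((ℤ → Bool), ℝ)) {ε : ℝ} {N : ℕ} {F : (Fin (2 * N) → Bool) → ℝ}
    (hF : ∀ x, |f (shift^[N] x) - F (word (2 * N) x)| ≤ ε) (ν : Measure (ℤ → Bool))
    [IsProbabilityMeasure ν] (hν : MeasurePreserving shift ν ν) :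
    |∫ y, f y ∂ν - ∑ w, pm ν (word (2 * N)) w * F w| ≤ ε := by
  have hm := measurable_word (2 * N)
  have hFi : Integrable (fun x => F (word (2 * N) x)) ν := by
    have : IsFiniteMeasure (ν.map (word (2 * N))) := inferInstance
    exact (Integrable.of_finite (μ := ν.map (word (2 * N))) (f := F)).comp_measurable hm
  have e2 : ∑ w, pm ν (word (2 * N)) w * F w = ∫ x, F (word (2 * N) x) ∂ν := by
    rw [← integral_map (f := F) hm.aemeasurable
      (Measurable.of_discrete (f := F)).aestronglyMeasurable, integral_fintype .of_finite]
    refine Finset.sum_congr rfl fun w _ => ?_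
    rw [map_measureReal_apply hm MeasurableSet.of_discrete]
    rfl
  have hs := hν.iterate N
  have hfm : AEStronglyMeasurable (fun x => f x) (ν.map shift^[N]) :=
    f.continuous.measurable.aestronglyMeasurable
  have e1 : ∫ y, f y ∂ν = ∫ x, f (shift^[N] x) ∂ν := by
    conv_lhs => rw [← hs.map_eq]
    exact integral_map hs.measurable.aemeasurable hfm
  have hfi : Integrable (fun x => f (shift^[N] x)) ν := by
    refine Integrable.of_bound
      (f.continuous.measurable.comp hs.measurable).aestronglyMeasurable
      ‖f‖ (ae_of_all _ fun x => ?_)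
    exact f.norm_coe_le_norm (shift^[N] x)
  rw [e1, e2, ← integral_sub hfi hFi]
  have := norm_integral_le_of_norm_le_const (μ := ν) (f := fun x =>
    f (shift^[N] x) - F (word (2 * N) x)) (ae_of_all _ hF)
  rwa [probReal_univ, mul_one, Real.norm_eq_abs] at this

/-- Convergence of word frequencies implies weak-star convergence. -/
lemma tendsto_integral_of_words {ν : ℕ → Measure (ℤ → Bool)} {μ : Measure (ℤ → Bool)}
    [∀ k, IsProbabilityMeasure (ν k)] [IsProbabilityMeasure μ]
    (hν : ∀ k, MeasurePreserving shift (ν k) (ν k)) (hμ : MeasurePreserving shift μ μ)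
    (h : ∀ (N : ℕ) (w : Fin N → Bool),
      Tendsto (fun k => pm (ν k) (word N) w) atTop (𝓝 (pm μ (word N) w))) (f : C((ℤ → Bool), ℝ)) :
    Tendsto (fun k => ∫ y, f y ∂(ν k)) atTop (𝓝 (∫ y, f y ∂μ)) := by
  refine Metric.tendsto_nhds.2 fun ε hε => ?_
  obtain ⟨N, F, hF⟩ := exists_word_approx f (show 0 < ε / 3 by positivity)
  have ht : Tendsto (fun k => ∑ w, pm (ν k) (word (2 * N)) w * F w) atTop
      (𝓝 (∑ w, pm μ (word (2 * N)) w * F w)) :=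
    tendsto_finsetSum _ fun w _ => (h _ w).mul_const _
  filter_upwards [Metric.tendsto_nhds.1 ht (ε / 3) (by positivity)] with k hk
  have h1 := abs_le.1 (integral_close f hF (ν k) (hν k))
  have h2 := abs_le.1 (integral_close f hF μ hμ)
  rw [Real.dist_eq, abs_lt] at hk ⊢
  constructor <;> linarith [h1.1, h1.2, h2.1, h2.2, hk.1, hk.2]

/-- for `𝓑` with regular Toeplitz `η*`, ergodic measures are
entropy-dense in `P(X_η)`: every `μ ∈ P(X_η)` is a weak-star limit of ergodic
measures `μ_n ∈ P^e(X_η)` with `h(μ_n) → h(μ)`. -/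
theorem statement8 (B : Set ℕ) (hB : 0 ∉ B)
    (hreg : RegularToeplitz (etaStar B))
    (μ : Measure (ℤ → Bool)) (hμ : μ ∈ InvM (Xeta B)) :
    ∃ μseq : ℕ → Measure (ℤ → Bool),
      (∀ k, μseq k ∈ InvM (Xeta B) ∧ Ergodic shift (μseq k)) ∧
      (∀ f : C((ℤ → Bool), ℝ),
        Tendsto (fun k => ∫ y, f y ∂(μseq k)) atTop (𝓝 (∫ y, f y ∂μ))) ∧
      Tendsto (fun k => measEnt (μseq k)) atTop (𝓝 (measEnt μ)) := by
  have hpos : ∀ k : ℕ, (0 : ℝ) < 1 / ((k : ℝ) + 1) := fun k => by positivity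
  choose ν hν hw hent using fun k : ℕ => exists_ergodic_approx hB hreg hμ k (hpos k)
  have hprob : ∀ k, IsProbabilityMeasure (ν k) := fun k => (hν k).1.1
  have hprobμ : IsProbabilityMeasure μ := hμ.1
  have hmpμ : MeasurePreserving shift μ μ := ⟨measurable_shift, hμ.2.1⟩
  have hmp : ∀ k, MeasurePreserving shift (ν k) (ν k) := fun k => (hν k).2.toMeasurePreserving
  have h0 : Tendsto (fun k : ℕ => 1 / ((k : ℝ) + 1)) atTop (𝓝 0) :=
    tendsto_one_div_add_atTop_nhds_zero_nat
  have hwords : ∀ (N : ℕ) (w : Fin N → Bool),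
      Tendsto (fun k => pm (ν k) (word N) w) atTop (𝓝 (pm μ (word N) w)) := by
    intro N w
    refine tendsto_iff_dist_tendsto_zero.2 (squeeze_zero' ?_ ?_ h0)
    · exact Eventually.of_forall fun _ => dist_nonneg
    · filter_upwards [eventually_ge_atTop N] with k hk
      exact hw k N hk w
  refine ⟨ν, hν, tendsto_integral_of_words hmp hmpμ hwords, ?_⟩
  have hlog : 0 < Real.log 2 := Real.log_pos (by norm_num)
  have hH : ∀ N, Tendsto (fun k => HH (ν k) (word N) / N) atTop (𝓝 (HH μ (word N) / N)) := by
    intro N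
    refine Tendsto.div_const (tendsto_finsetSum _ fun w _ => ?_) _
    exact (Real.continuous_negMulLog.tendsto _).comp (hwords N w)
  have hlim : Tendsto (fun k => measEnt (ν k) * Real.log 2) atTop (𝓝 (measEnt μ * Real.log 2)) := by
    refine tendsto_order.2 ⟨fun a ha => ?_, fun a ha => ?_⟩
    · have h1 : Tendsto (fun k : ℕ => measEnt μ * Real.log 2 - 1 / ((k : ℝ) + 1)) atTop
          (𝓝 (measEnt μ * Real.log 2 - 0)) := h0.const_sub _
      rw [sub_zero] at h1
      filter_upwards [h1.eventually (lt_mem_nhds ha)] with k hk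
      exact hk.trans_le (hent k)
    · -- upper semicontinuity: entropy is the infimum of continuous functions
      obtain ⟨n, hn, hn0⟩ := (((tendsto_measEnt hmpμ).1.eventually (gt_mem_nhds ha)).and
        (eventually_ne_atTop 0)).exists
      filter_upwards [(hH n).eventually (gt_mem_nhds hn)] with k hk
      exact ((tendsto_measEnt (hmp k)).2 n hn0).trans_lt hk
  have := hlim.div_const (Real.log 2)
  simpa only [mul_div_cancel_right₀ _ hlog.ne'] using this

end BFree
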